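/- Let B be the open unit ball of ℝ⁴ and B̄ its closure. Let Λ > 0, let (ρ_k) be a sequence of reals with 0 < ρ_k ≤ Λ for all k, and let (u_k) be a sequence of solutions of the Dirichlet mean field problem on B with parameters ρ_k. Assume that sup_{x ∈ B̄} u_k(x) → +∞ as k → ∞. Then there exist a positive integer m and a strictly increasing sequence of indices (k_j) such that ρ_{k_j} → 64π²·m as j → ∞. -/

import Mathlib

open MeasureTheory Metric Filter

noncomputable section

/-- The Laplacian of `f : ℝ⁴ → ℝ` at `x`: the trace of the second derivative. -/
def lap (f : EuclideanSpace ℝ (Fin 4) → ℝ) (x : EuclideanSpace ℝ (Fin 4)) : ℝ :=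
  ∑ i : Fin 4,
    fderiv ℝ (fun y => fderiv ℝ f y (EuclideanSpace.single i (1:ℝ))) x
      (EuclideanSpace.single i (1:ℝ))

/-- `u` is a solution of the Dirichlet mean field problem on the open unit ball of `ℝ⁴`
with parameter `ρ`: `u` is `C⁴` on the closed ball, `Δ²u = ρ e^u / ∫_B e^u` in `B`, and
`u = ∂_ν u = 0` on the boundary sphere. -/
def IsMFSolution (ρ : ℝ) (u : EuclideanSpace ℝ (Fin 4) → ℝ) : Prop :=
  ContDiffOn ℝ 4 u (closedBall (0 : EuclideanSpace ℝ (Fin 4)) 1) ∧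
  (∀ x ∈ ball (0 : EuclideanSpace ℝ (Fin 4)) 1,
    lap (lap u) x
      = ρ * Real.exp (u x) /
          ∫ y in ball (0 : EuclideanSpace ℝ (Fin 4)) 1, Real.exp (u y)) ∧
  (∀ x : EuclideanSpace ℝ (Fin 4), ‖x‖ = 1 →
    u x = 0 ∧ fderivWithin ℝ u (closedBall (0 : EuclideanSpace ℝ (Fin 4)) 1) x = 0)

local notation "E4" => EuclideanSpace ℝ (Fin 4)
local notation "B1" => ball (0 : EuclideanSpace ℝ (Fin 4)) 1
local notation "CB" => closedBall (0 : EuclideanSpace ℝ (Fin 4)) 1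



lemma uniqueDiffOn_CB : UniqueDiffOn ℝ CB :=
  uniqueDiffOn_convex (convex_closedBall _ _)
    ⟨0, by rw [interior_closedBall _ one_ne_zero]; simp⟩

lemma lipschitz_ext (F : E4 → ℝ) (hF : ContDiffOn ℝ 1 F CB) (h0 : ∀ x, ‖x‖ = 1 → F x = 0) :
    ∃ K, LipschitzWith K (Set.indicator CB F) := by
  have hc : ContinuousOn (fun x => ‖fderivWithin ℝ F CB x‖₊) CB :=
    (hF.continuousOn_fderivWithin uniqueDiffOn_CB le_rfl).nnnorm
  obtain ⟨K, hK⟩ := ((isCompact_closedBall (0:E4) 1).image_of_continuousOn hc).bddAbove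
  have hL : LipschitzOnWith K F CB :=
    (convex_closedBall _ _).lipschitzOnWith_of_nnnorm_fderivWithin_le (hF.differentiableOn one_ne_zero)
      (fun x hx => hK ⟨x, hx, rfl⟩)
  have key : ∀ x ∈ CB, ∀ y ∉ CB, dist (F x) 0 ≤ K * dist x y := by
    intro x hx y hy
    simp only [mem_closedBall, dist_zero_right, not_le] at hx hy
    have hcont : ContinuousOn (fun t : ℝ => ‖AffineMap.lineMap x y t‖) (Set.Icc (0:ℝ) 1) := by
      apply Continuous.continuousOn
      exact (AffineMap.lineMap_continuous).norm
    have := intermediate_value_Icc (zero_le_one) hcont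
    obtain ⟨t, ht, htz⟩ := this (show (1:ℝ) ∈ _ by simp [hx, hy.le])
    have hz := h0 _ htz
    rw [← hz]
    refine (hL.dist_le_mul x (by simpa using hx) _ (by simp only [mem_closedBall, dist_zero_right]; exact htz.le)).trans ?_
    gcongr
    rw [dist_left_lineMap, Real.norm_of_nonneg ht.1]
    exact mul_le_of_le_one_left dist_nonneg ht.2
  refine ⟨K, LipschitzWith.of_dist_le_mul fun x y => ?_⟩
  by_cases hx : x ∈ CB <;> by_cases hy : y ∈ CB
  · simp only [Set.indicator_of_mem hx, Set.indicator_of_mem hy]; exact hL.dist_le_mul x hx y hy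
  · simp only [Set.indicator_of_mem hx, Set.indicator_of_notMem hy]; exact key x hx y hy
  · simp only [Set.indicator_of_notMem hx, Set.indicator_of_mem hy]
    rw [dist_comm, dist_comm x]; exact key y hy x hx
  · simp only [Set.indicator_of_notMem hx, Set.indicator_of_notMem hy, dist_self]; positivity

lemma ball_div_zero (F : E4 → ℝ) (hF : ContDiffOn ℝ 1 F CB) (h0 : ∀ x, ‖x‖ = 1 → F x = 0) (v : E4) :
    ∫ x in B1, fderiv ℝ F x v = 0 := by
  obtain ⟨K, hK⟩ := lipschitz_ext F hF h0
  have hcs : HasCompactSupport (Set.indicator CB F) :=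
    HasCompactSupport.intro (isCompact_closedBall (0:E4) 1) (fun x hx => Set.indicator_of_notMem hx _)
  have := LipschitzWith.integral_lineDeriv_mul_eq (μ := volume) (LipschitzWith.const (1:ℝ)) hK hcs (-v)
  have hl : ∀ x : E4, lineDeriv ℝ (fun _ : E4 => (1:ℝ)) x (-v) = 0 := fun x => by simp [lineDeriv]
  simp only [hl, zero_mul, integral_zero, neg_neg, mul_one] at this
  rw [← integral_indicator measurableSet_ball, this]
  apply integral_congr_ae
  have hs : volume (sphere (0:E4) 1) = 0 := Measure.addHaar_sphere volume 0 1
  filter_upwards [measure_eq_zero_iff_ae_notMem.1 hs] with x hx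
  simp only [mem_sphere, dist_zero_right] at hx
  rcases lt_or_gt_of_ne hx with h | h
  · have hxB : x ∈ B1 := by simpa using h
    rw [Set.indicator_of_mem hxB]
    have hnh : Set.indicator CB F =ᶠ[nhds x] F := by
      filter_upwards [isOpen_ball.mem_nhds hxB] with y hy
      exact Set.indicator_of_mem (ball_subset_closedBall hy) _
    have hd : DifferentiableAt ℝ F x :=
      (hF.differentiableOn one_ne_zero).differentiableAt (closedBall_mem_nhds_of_mem hxB)
    rw [hnh.lineDeriv_eq, hd.lineDeriv_eq_fderiv]
  · have hxB : x ∉ B1 := by simpa using h.le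
    rw [Set.indicator_of_notMem hxB]
    have hnh : Set.indicator CB F =ᶠ[nhds x] (fun _ => 0) := by
      have : x ∈ (CB)ᶜ := by simpa using h
      filter_upwards [isClosed_closedBall.isOpen_compl.mem_nhds this] with y hy
      exact Set.indicator_of_notMem hy _
    rw [hnh.lineDeriv_eq]; simp [lineDeriv]

/-- partial derivative within the closed ball -/
def pdw (f : E4 → ℝ) (i : Fin 4) (x : E4) : ℝ :=
  fderivWithin ℝ f CB x (EuclideanSpace.single i (1:ℝ))

def lapW (f : E4 → ℝ) (x : E4) : ℝ := ∑ i, pdw (pdw f i) i x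

lemma pdw_contDiffOn {f : E4 → ℝ} {n m : WithTop ℕ∞} (hf : ContDiffOn ℝ n f CB) (hmn : m + 1 ≤ n) (i : Fin 4) :
    ContDiffOn ℝ m (pdw f i) CB :=
  (hf.fderivWithin uniqueDiffOn_CB hmn).clm_apply contDiffOn_const

lemma lapW_contDiffOn {f : E4 → ℝ} {n m k : WithTop ℕ∞} (hf : ContDiffOn ℝ n f CB) (hmn : m + 1 ≤ n)
    (hk : k + 1 ≤ m) :
    ContDiffOn ℝ k (lapW f) CB := by
  unfold lapW
  exact ContDiffOn.sum fun i _ => pdw_contDiffOn (pdw_contDiffOn hf hmn i) hk i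

lemma CB_nhds {x : E4} (hx : x ∈ B1) : CB ∈ nhds x := closedBall_mem_nhds_of_mem hx

lemma pdw_eq (f : E4 → ℝ) (i : Fin 4) {x : E4} (hx : x ∈ B1) :
    pdw f i x = fderiv ℝ f x (EuclideanSpace.single i (1:ℝ)) := by
  unfold pdw; rw [fderivWithin_of_mem_nhds (CB_nhds hx)]

lemma pdw_eventually (f : E4 → ℝ) (i : Fin 4) {x : E4} (hx : x ∈ B1) :
    pdw f i =ᶠ[nhds x] fun y => fderiv ℝ f y (EuclideanSpace.single i (1:ℝ)) := by
  filter_upwards [isOpen_ball.mem_nhds hx] with y hy using pdw_eq f i hy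

lemma lapW_eq (f : E4 → ℝ) {x : E4} (hx : x ∈ B1) : lapW f x = lap f x := by
  unfold lapW lap
  refine Finset.sum_congr rfl fun i _ => ?_
  rw [pdw_eq _ _ hx, (pdw_eventually f i hx).fderiv_eq]

lemma lap_congr {f g : E4 → ℝ} {x : E4} (h : f =ᶠ[nhds x] g) : lap f x = lap g x := by
  unfold lap
  refine Finset.sum_congr rfl fun i _ => ?_
  have : (fun y => fderiv ℝ f y (EuclideanSpace.single i (1:ℝ))) =ᶠ[nhds x]
      fun y => fderiv ℝ g y (EuclideanSpace.single i (1:ℝ)) := by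
    filter_upwards [h.eventuallyEq_nhds] with y hy
    rw [hy.fderiv_eq]
  rw [this.fderiv_eq]

lemma lap_lapW_eq (f : E4 → ℝ) {x : E4} (hx : x ∈ B1) : lap (lapW f) x = lap (lap f) x := by
  apply lap_congr
  filter_upwards [isOpen_ball.mem_nhds hx] with y hy using lapW_eq f hy

lemma contOn_integrable {f : E4 → ℝ} (hf : ContinuousOn f CB) : IntegrableOn f B1 :=
  (hf.integrableOn_compact (isCompact_closedBall _ _)).mono_set ball_subset_closedBall

lemma lap_integrable_mul {f g : E4 → ℝ} (hf : ContDiffOn ℝ 2 f CB) (hg : ContinuousOn g CB) :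
    IntegrableOn (fun x => g x * lap f x) B1 := by
  have : IntegrableOn (fun x => g x * lapW f x) B1 :=
    contOn_integrable (hg.mul (lapW_contDiffOn (m := 1) (k := 0) hf (by norm_num) (by norm_num)).continuousOn)
  refine this.congr_fun (fun x hx => ?_) measurableSet_ball
  simp only [lapW_eq f hx]

/-- Green's second identity for zero Dirichlet data. -/
lemma green {g w : E4 → ℝ} (hg : ContDiffOn ℝ 2 g CB) (hw : ContDiffOn ℝ 2 w CB)
    (h0 : ∀ x, ‖x‖ = 1 → g x = 0) (h1 : ∀ x, ‖x‖ = 1 → fderivWithin ℝ g CB x = 0) :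
    ∫ x in B1, g x * lap w x = ∫ x in B1, w x * lap g x := by
  have hgc := hg.continuousOn
  have hwc := hw.continuousOn
  rw [← sub_eq_zero, ← integral_sub (lap_integrable_mul hw hgc) (lap_integrable_mul hg hwc)]
  have hpg := fun i => pdw_contDiffOn (m := 1) hg (by norm_num) i
  have hpw := fun i => pdw_contDiffOn (m := 1) hw (by norm_num) i
  have hg1 : ContDiffOn ℝ 1 g CB := hg.of_le (by norm_num)
  have hw1 : ContDiffOn ℝ 1 w CB := hw.of_le (by norm_num)
  let F : Fin 4 → E4 → ℝ := fun i x => g x * pdw w i x - w x * pdw g i x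
  have hF : ∀ i, ContDiffOn ℝ 1 (F i) CB := fun i => (hg1.mul (hpw i)).sub (hw1.mul (hpg i))
  have hF0 : ∀ i x, ‖x‖ = 1 → F i x = 0 := by
    intro i x hx
    simp [F, pdw, h0 x hx, h1 x hx]
  have hsum : ∀ x ∈ B1, g x * lap w x - w x * lap g x =
      ∑ i, fderiv ℝ (F i) x (EuclideanSpace.single i (1:ℝ)) := by
    intro x hx
    rw [← lapW_eq w hx, ← lapW_eq g hx]
    unfold lapW
    rw [Finset.mul_sum, Finset.mul_sum, ← Finset.sum_sub_distrib]
    refine Finset.sum_congr rfl fun i _ => ?_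
    have n := CB_nhds hx
    have dg : DifferentiableAt ℝ g x := (hg1.differentiableOn one_ne_zero).differentiableAt n
    have dw : DifferentiableAt ℝ w x := (hw1.differentiableOn one_ne_zero).differentiableAt n
    have dpg : DifferentiableAt ℝ (pdw g i) x := ((hpg i).differentiableOn one_ne_zero).differentiableAt n
    have dpw : DifferentiableAt ℝ (pdw w i) x := ((hpw i).differentiableOn one_ne_zero).differentiableAt n
    simp only [F]
    rw [fderiv_fun_sub (dg.fun_mul dpw) (dw.fun_mul dpg), fderiv_fun_mul dg dpw, fderiv_fun_mul dw dpg]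
    simp only [_root_.sub_apply, _root_.add_apply, _root_.smul_apply, smul_eq_mul]
    rw [pdw_eq (pdw w i) i hx, pdw_eq (pdw g i) i hx, pdw_eq w i hx, pdw_eq g i hx]
    ring
  rw [setIntegral_congr_fun measurableSet_ball hsum, integral_finsetSum]
  · exact Finset.sum_eq_zero fun i _ => ball_div_zero (F i) (hF i) (hF0 i) _
  · intro i _
    have := contOn_integrable (pdw_contDiffOn (m := 0) (hF i) (by norm_num) i).continuousOn
    exact this.congr_fun (fun x hx => pdw_eq _ _ hx) measurableSet_ball





/-- a quadratic function with isotropic quadratic part -/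
def quad (α : ℝ) (b : E4) (γ : ℝ) (z : E4) : ℝ := α * ‖z‖ ^ 2 + inner ℝ b z + γ

lemma quad_contDiff (α : ℝ) (b : E4) (γ : ℝ) {n : WithTop ℕ∞} : ContDiff ℝ n (quad α b γ) := by
  unfold quad
  have h1 : ContDiff ℝ n (fun z : E4 => ‖z‖ ^ 2) := contDiff_norm_sq ℝ
  have h2 : ContDiff ℝ n (fun z : E4 => inner ℝ b z) := contDiff_const.inner ℝ contDiff_id
  exact ((contDiff_const.mul h1).add h2).add contDiff_const

lemma quad_fderiv (α : ℝ) (b : E4) (γ : ℝ) (z : E4) (i : Fin 4) :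
    fderiv ℝ (quad α b γ) z (EuclideanSpace.single i (1:ℝ)) = 2 * α * z i + b i := by
  have hd : DifferentiableAt ℝ (quad α b γ) z := (quad_contDiff α b γ (n := 1)).differentiable one_ne_zero z
  have h1 : HasFDerivAt (fun z : E4 => ‖z‖ ^ 2) (2 • (innerSL ℝ z)) z := (hasStrictFDerivAt_norm_sq z).hasFDerivAt
  have h2 : HasFDerivAt (fun z : E4 => inner ℝ b z) (innerSL ℝ b) z := (innerSL ℝ b).hasFDerivAt
  have := ((h1.const_mul α).add h2).add_const γ
  have h3 : HasFDerivAt (quad α b γ) _ z := this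
  rw [h3.fderiv]
  simp [EuclideanSpace.inner_single_right]
  ring

lemma comp_quad_fderiv (φ : ℝ → ℝ) (φ1 : ℝ) (α : ℝ) (b : E4) (γ : ℝ) (z : E4) (i : Fin 4)
    (h : HasDerivAt φ φ1 (quad α b γ z)) :
    fderiv ℝ (fun y => φ (quad α b γ y)) z (EuclideanSpace.single i (1:ℝ)) = φ1 * (2 * α * z i + b i) := by
  have hd : DifferentiableAt ℝ (quad α b γ) z := (quad_contDiff α b γ (n := 1)).differentiable one_ne_zero z
  have := h.comp_hasFDerivAt z hd.hasFDerivAt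
  have h3 : HasFDerivAt (fun y => φ (quad α b γ y)) _ z := this
  rw [h3.fderiv, ← quad_fderiv α b γ]
  simp

lemma quad_grad_sq (α : ℝ) (b : E4) (γ : ℝ) (z : E4) :
    ∑ i, (2 * α * z i + b i) ^ 2 = 4 * α * (quad α b γ z - γ) + ‖b‖ ^ 2 := by
  unfold quad
  rw [EuclideanSpace.real_norm_sq_eq, EuclideanSpace.real_norm_sq_eq, PiLp.inner_apply]
  simp [Fin.sum_univ_four]
  ring

lemma lap_comp_quad (φ φ1 : ℝ → ℝ) (φ2 : ℝ) (α : ℝ) (b : E4) (γ : ℝ) (z : E4)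
    (h1 : ∀ᶠ t in nhds (quad α b γ z), HasDerivAt φ (φ1 t) t)
    (h2 : HasDerivAt φ1 φ2 (quad α b γ z)) :
    lap (fun y => φ (quad α b γ y)) z =
      φ2 * (4 * α * (quad α b γ z - γ) + ‖b‖ ^ 2) + φ1 (quad α b γ z) * (8 * α) := by
  rw [← quad_grad_sq]
  have hc : Continuous (quad α b γ) := (quad_contDiff α b γ (n := 1)).continuous
  have hev := hc.continuousAt.eventually h1
  have key : ∀ i : Fin 4, fderiv ℝ (fun y => fderiv ℝ (fun y => φ (quad α b γ y)) y (EuclideanSpace.single i (1:ℝ))) z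
      (EuclideanSpace.single i (1:ℝ)) = φ2 * (2 * α * z i + b i) ^ 2 + φ1 (quad α b γ z) * (2 * α) := by
    intro i
    have hE : (fun y => fderiv ℝ (fun y => φ (quad α b γ y)) y (EuclideanSpace.single i (1:ℝ))) =ᶠ[nhds z]
        fun y => φ1 (quad α b γ y) * (2 * α * y i + b i) := by
      filter_upwards [hev] with y hy using comp_quad_fderiv φ _ α b γ y i hy
    rw [hE.fderiv_eq]
    have hd : DifferentiableAt ℝ (quad α b γ) z := (quad_contDiff α b γ (n := 1)).differentiable one_ne_zero z
    have d1 : DifferentiableAt ℝ (fun y => φ1 (quad α b γ y)) z := h2.differentiableAt.comp z hd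
    have hpi : HasFDerivAt (fun y : E4 => y i) (EuclideanSpace.proj (𝕜 := ℝ) i) z := (EuclideanSpace.proj (𝕜 := ℝ) i).hasFDerivAt
    have h5 := (hpi.const_mul (2 * α)).add_const (b i)
    rw [fderiv_fun_mul d1 h5.differentiableAt, h5.fderiv]
    simp only [_root_.add_apply, _root_.smul_apply, smul_eq_mul]
    rw [comp_quad_fderiv φ1 φ2 α b γ z i h2]
    simp
    ring
  unfold lap
  simp only [key, Fin.sum_univ_four]
  ring

lemma lap_mul {f g : E4 → ℝ} {z : E4} (hf : ContDiffAt ℝ 2 f z) (hg : ContDiffAt ℝ 2 g z) :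
    lap (fun y => f y * g y) z = f z * lap g z + g z * lap f z +
      2 * ∑ i, fderiv ℝ f z (EuclideanSpace.single i (1:ℝ)) * fderiv ℝ g z (EuclideanSpace.single i (1:ℝ)) := by
  have ef : ∀ᶠ y in nhds z, DifferentiableAt ℝ f y := by
    filter_upwards [(hf.of_le (m := 1) (by norm_num)).eventually (by simp)] with y hy using hy.differentiableAt one_ne_zero
  have eg : ∀ᶠ y in nhds z, DifferentiableAt ℝ g y := by
    filter_upwards [(hg.of_le (m := 1) (by norm_num)).eventually (by simp)] with y hy using hy.differentiableAt one_ne_zero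
  unfold lap
  rw [Finset.mul_sum, Finset.mul_sum, Finset.mul_sum, ← Finset.sum_add_distrib, ← Finset.sum_add_distrib]
  refine Finset.sum_congr rfl fun i _ => ?_
  have hE : (fun y => fderiv ℝ (fun y => f y * g y) y (EuclideanSpace.single i (1:ℝ))) =ᶠ[nhds z]
      fun y => f y * fderiv ℝ g y (EuclideanSpace.single i (1:ℝ)) + g y * fderiv ℝ f y (EuclideanSpace.single i (1:ℝ)) := by
    filter_upwards [ef, eg] with y h1 h2
    rw [fderiv_fun_mul h1 h2]; simp
  have dpf : DifferentiableAt ℝ (fun y => fderiv ℝ f y (EuclideanSpace.single i (1:ℝ))) z :=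
    ((hf.fderiv_right (m := 1) (by norm_num)).clm_apply contDiffAt_const).differentiableAt one_ne_zero
  have dpg : DifferentiableAt ℝ (fun y => fderiv ℝ g y (EuclideanSpace.single i (1:ℝ))) z :=
    ((hg.fderiv_right (m := 1) (by norm_num)).clm_apply contDiffAt_const).differentiableAt one_ne_zero
  have df := ef.self_of_nhds
  have dg := eg.self_of_nhds
  rw [hE.fderiv_eq, fderiv_fun_add (df.fun_mul dpg) (dg.fun_mul dpf), fderiv_fun_mul df dpg, fderiv_fun_mul dg dpf]
  simp only [_root_.add_apply, _root_.smul_apply, smul_eq_mul]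
  ring

lemma lap_add {f g : E4 → ℝ} {z : E4} (hf : ContDiffAt ℝ 2 f z) (hg : ContDiffAt ℝ 2 g z) :
    lap (fun y => f y + g y) z = lap f z + lap g z := by
  have ef : ∀ᶠ y in nhds z, DifferentiableAt ℝ f y := by
    filter_upwards [(hf.of_le (m := 1) (by norm_num)).eventually (by simp)] with y hy using hy.differentiableAt one_ne_zero
  have eg : ∀ᶠ y in nhds z, DifferentiableAt ℝ g y := by
    filter_upwards [(hg.of_le (m := 1) (by norm_num)).eventually (by simp)] with y hy using hy.differentiableAt one_ne_zero
  unfold lap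
  rw [← Finset.sum_add_distrib]
  refine Finset.sum_congr rfl fun i _ => ?_
  have hE : (fun y => fderiv ℝ (fun y => f y + g y) y (EuclideanSpace.single i (1:ℝ))) =ᶠ[nhds z]
      fun y => fderiv ℝ f y (EuclideanSpace.single i (1:ℝ)) + fderiv ℝ g y (EuclideanSpace.single i (1:ℝ)) := by
    filter_upwards [ef, eg] with y h1 h2
    rw [fderiv_fun_add h1 h2]; simp
  have dpf : DifferentiableAt ℝ (fun y => fderiv ℝ f y (EuclideanSpace.single i (1:ℝ))) z :=
    ((hf.fderiv_right (m := 1) (by norm_num)).clm_apply contDiffAt_const).differentiableAt one_ne_zero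
  have dpg : DifferentiableAt ℝ (fun y => fderiv ℝ g y (EuclideanSpace.single i (1:ℝ))) z :=
    ((hg.fderiv_right (m := 1) (by norm_num)).clm_apply contDiffAt_const).differentiableAt one_ne_zero
  rw [hE.fderiv_eq, fderiv_fun_add dpf dpg]
  simp only [_root_.add_apply]

lemma lap_const_mul {g : E4 → ℝ} (c : ℝ) {z : E4} (hg : ContDiffAt ℝ 2 g z) :
    lap (fun y => c * g y) z = c * lap g z := by
  rw [lap_mul contDiffAt_const hg]
  have : lap (fun _ : E4 => c) z = 0 := by simp [lap]
  rw [this]; simp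

/-- squared distance and the Kelvin quantity -/
def tq (x : E4) : E4 → ℝ := quad 1 ((-2 : ℝ) • x) (‖x‖ ^ 2)
def Dq (x : E4) : E4 → ℝ := quad (‖x‖ ^ 2) ((-2 : ℝ) • x) 1

lemma tq_eq (x y : E4) : tq x y = ‖x - y‖ ^ 2 := by
  unfold tq quad
  rw [norm_sub_sq_real, inner_smul_left]; simp; ring

lemma Dq_eq (x y : E4) : Dq x y = ‖x - y‖ ^ 2 + (1 - ‖x‖ ^ 2) * (1 - ‖y‖ ^ 2) := by
  unfold Dq quad
  rw [norm_sub_sq_real, inner_smul_left]; simp; ring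

lemma Dq_ge (x y : E4) (hx : ‖x‖ ≤ 1) (hy : ‖y‖ ≤ 1) : (1 - ‖x‖) ^ 2 ≤ Dq x y := by
  unfold Dq quad
  rw [inner_smul_left]; simp
  have h1 := real_inner_le_norm x y
  nlinarith [norm_nonneg x, norm_nonneg y, mul_nonneg (norm_nonneg x) (norm_nonneg y), mul_nonneg (norm_nonneg x) (sub_nonneg.2 hy)]

lemma Dq_pos {x y : E4} (hx : x ∈ B1) (hy : y ∈ CB) : 0 < Dq x y := by
  simp at hx hy
  exact lt_of_lt_of_le (by have : 0 < 1 - ‖x‖ := by linarith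
                           positivity) (Dq_ge x y hx.le hy)





/-- Boggio profile -/
def hB (s : ℝ) : ℝ := Real.log (1 + s) - s / (1 + s)

/-- Boggio's Green function (up to the factor `1/(16π²)`) -/
def GB (x y : E4) : ℝ := hB ((1 - ‖x‖ ^ 2) * (1 - ‖y‖ ^ 2) / ‖x - y‖ ^ 2)

def qy : E4 → ℝ := quad (-1) 0 1

lemma qy_eq (y : E4) : qy y = 1 - ‖y‖ ^ 2 := by simp [qy, quad]; ring

def Geps (x : E4) (ε : ℝ) (y : E4) : ℝ :=
  (-1) * Real.log (tq x y + ε) + (Real.log (Dq x y + ε) + (-(1 - ‖x‖ ^ 2)) * (qy y * (Dq x y + ε)⁻¹))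

lemma tq_nonneg (x y : E4) : 0 ≤ tq x y := by rw [tq_eq]; positivity

lemma tq_contDiff (x : E4) {n : WithTop ℕ∞} : ContDiff ℝ n (tq x) := quad_contDiff _ _ _
lemma Dq_contDiff (x : E4) {n : WithTop ℕ∞} : ContDiff ℝ n (Dq x) := quad_contDiff _ _ _
lemma qy_contDiff {n : WithTop ℕ∞} : ContDiff ℝ n qy := quad_contDiff _ _ _

lemma cd_logt (x : E4) {ε : ℝ} (hε : 0 < ε) (y : E4) {n : WithTop ℕ∞} :
    ContDiffAt ℝ n (fun y => Real.log (tq x y + ε)) y :=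
  ((tq_contDiff x).contDiffAt.add contDiffAt_const).log (by have := tq_nonneg x y; positivity)

lemma cd_logD {x : E4} (hx : x ∈ B1) {ε : ℝ} (hε : 0 ≤ ε) {y : E4} (hy : y ∈ CB) {n : WithTop ℕ∞} :
    ContDiffAt ℝ n (fun y => Real.log (Dq x y + ε)) y :=
  ((Dq_contDiff x).contDiffAt.add contDiffAt_const).log (by have := Dq_pos hx hy; positivity)

lemma cd_invD {x : E4} (hx : x ∈ B1) {ε : ℝ} (hε : 0 ≤ ε) {y : E4} (hy : y ∈ CB) {n : WithTop ℕ∞} :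
    ContDiffAt ℝ n (fun y => (Dq x y + ε)⁻¹) y :=
  ((Dq_contDiff x).contDiffAt.add contDiffAt_const).inv (by have := Dq_pos hx hy; positivity)

lemma Geps_contDiffAt {x : E4} (hx : x ∈ B1) {ε : ℝ} (hε : 0 < ε) {y : E4} (hy : y ∈ CB) {n : WithTop ℕ∞} :
    ContDiffAt ℝ n (Geps x ε) y := by
  unfold Geps
  exact (contDiffAt_const.mul (cd_logt x hε y)).add ((cd_logD hx hε.le hy).add
    (contDiffAt_const.mul ((qy_contDiff).contDiffAt.mul (cd_invD hx hε.le hy))))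

lemma hasDerivAt_log_add (ε t : ℝ) (h : t + ε ≠ 0) :
    HasDerivAt (fun t => Real.log (t + ε)) ((t + ε)⁻¹) t := by
  simpa using ((hasDerivAt_id t).add_const ε).log h

lemma hasDerivAt_inv_add (ε t : ℝ) (h : t + ε ≠ 0) :
    HasDerivAt (fun t => (t + ε)⁻¹) (-((t + ε)⁻¹) ^ 2) t := by
  have := ((hasDerivAt_id t).add_const ε).inv h
  exact this.congr_deriv (by simp; field_simp)

lemma hasDerivAt_neg_inv_sq_add (ε t : ℝ) (h : t + ε ≠ 0) :
    HasDerivAt (fun t => -((t + ε)⁻¹) ^ 2) (2 * ((t + ε)⁻¹) ^ 3) t := by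
  have := ((hasDerivAt_inv_add ε t h).pow 2).neg
  exact this.congr_deriv (by norm_num only [Nat.cast_ofNat]; ring)

lemma ev_ne (ε t : ℝ) (h : t + ε ≠ 0) : ∀ᶠ s in nhds t, s + ε ≠ 0 :=
  (continuous_id.add continuous_const).continuousAt.eventually_ne h

lemma lap_log_quad (α : ℝ) (b : E4) (γ ε : ℝ) (z : E4) (h : quad α b γ z + ε ≠ 0) :
    lap (fun y => Real.log (quad α b γ y + ε)) z =
      -((quad α b γ z + ε)⁻¹) ^ 2 * (4 * α * (quad α b γ z - γ) + ‖b‖ ^ 2) + (quad α b γ z + ε)⁻¹ * (8 * α) :=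
  lap_comp_quad (fun t => Real.log (t + ε)) (fun t => (t + ε)⁻¹) _ α b γ z
    ((ev_ne _ _ h).mono fun t ht => hasDerivAt_log_add ε t ht) (hasDerivAt_inv_add ε _ h)

lemma lap_inv_quad (α : ℝ) (b : E4) (γ ε : ℝ) (z : E4) (h : quad α b γ z + ε ≠ 0) :
    lap (fun y => (quad α b γ y + ε)⁻¹) z =
      2 * ((quad α b γ z + ε)⁻¹) ^ 3 * (4 * α * (quad α b γ z - γ) + ‖b‖ ^ 2) + -((quad α b γ z + ε)⁻¹) ^ 2 * (8 * α) :=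
  lap_comp_quad (fun t => (t + ε)⁻¹) (fun t => -((t + ε)⁻¹) ^ 2) _ α b γ z
    ((ev_ne _ _ h).mono fun t ht => hasDerivAt_inv_add ε t ht) (hasDerivAt_neg_inv_sq_add ε _ h)

lemma lap_quad (α : ℝ) (b : E4) (γ : ℝ) (z : E4) : lap (quad α b γ) z = 8 * α := by
  have := lap_comp_quad (fun t => t) (fun _ => 1) 0 α b γ z (Eventually.of_forall fun t => hasDerivAt_id' t) (hasDerivAt_const _ _)
  simpa using this

/-- the regular part of the Laplacian of the regularized Green function -/
def Rp (x : E4) (ε : ℝ) (y : E4) : ℝ :=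
  -4 * ‖x‖ ^ 2 * Dq x y * ((Dq x y + ε)⁻¹) ^ 2 + 8 * ‖x‖ ^ 2 * (Dq x y + ε)⁻¹
   - (1 - ‖x‖ ^ 2) * ((1 - ‖y‖ ^ 2) * (8 * ‖x‖ ^ 2 * Dq x y * ((Dq x y + ε)⁻¹) ^ 3 - 8 * ‖x‖ ^ 2 * ((Dq x y + ε)⁻¹) ^ 2)
      - 8 * (Dq x y + ε)⁻¹ + 8 * (‖x‖ ^ 2 * ‖y‖ ^ 2 - inner ℝ x y) * ((Dq x y + ε)⁻¹) ^ 2)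

lemma lap_Geps {x : E4} (hx : x ∈ B1) {ε : ℝ} (hε : 0 < ε) {y : E4} (hy : y ∈ CB) :
    lap (Geps x ε) y = 4 * tq x y * ((tq x y + ε)⁻¹) ^ 2 - 8 * (tq x y + ε)⁻¹ + Rp x ε y := by
  have ht : tq x y + ε ≠ 0 := by have := tq_nonneg x y; positivity
  have hD : Dq x y + ε ≠ 0 := by have := Dq_pos hx hy; positivity
  unfold Geps
  have c1 := cd_logt x hε y (n := 2)
  have c2 := cd_logD hx hε.le hy (n := 2)
  have c3 := cd_invD hx hε.le hy (n := 2)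
  have c4 : ContDiffAt ℝ 2 qy y := qy_contDiff.contDiffAt
  rw [lap_add (contDiffAt_const.mul c1) (c2.add (contDiffAt_const.mul (c4.mul c3))),
    lap_add c2 (contDiffAt_const.mul (c4.mul c3)), lap_const_mul _ c1, lap_const_mul _ (c4.mul c3),
    lap_mul c4 c3]
  have e1 := lap_log_quad 1 ((-2:ℝ) • x) (‖x‖ ^ 2) ε y ht
  have e2 := lap_log_quad (‖x‖ ^ 2) ((-2:ℝ) • x) 1 ε y hD
  have e3 := lap_inv_quad (‖x‖ ^ 2) ((-2:ℝ) • x) 1 ε y hD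
  have e4 : lap qy y = 8 * (-1) := lap_quad _ _ _ _
  have f1 : ∀ i, fderiv ℝ qy y (EuclideanSpace.single i (1:ℝ)) = 2 * (-1) * y i + (0 : E4) i := fun i => quad_fderiv _ _ _ _ _
  have f2 : ∀ i, fderiv ℝ (fun y => (Dq x y + ε)⁻¹) y (EuclideanSpace.single i (1:ℝ)) =
      -((Dq x y + ε)⁻¹) ^ 2 * (2 * ‖x‖ ^ 2 * y i + ((-2:ℝ) • x) i) := fun i =>
    comp_quad_fderiv (fun t => (t + ε)⁻¹) _ _ _ _ y i (hasDerivAt_inv_add ε _ hD)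
  change lap (fun y => Real.log (tq x y + ε)) y = -((tq x y + ε)⁻¹) ^ 2 * (4 * 1 * (tq x y - ‖x‖ ^ 2) + _) + (tq x y + ε)⁻¹ * (8 * 1) at e1
  change lap (fun y => Real.log (Dq x y + ε)) y = -((Dq x y + ε)⁻¹) ^ 2 * (4 * ‖x‖ ^ 2 * (Dq x y - 1) + _) + (Dq x y + ε)⁻¹ * (8 * ‖x‖ ^ 2) at e2
  change lap (fun y => (Dq x y + ε)⁻¹) y = 2 * ((Dq x y + ε)⁻¹) ^ 3 * (4 * ‖x‖ ^ 2 * (Dq x y - 1) + _) + -((Dq x y + ε)⁻¹) ^ 2 * (8 * ‖x‖ ^ 2) at e3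
  have hb : ‖(-2:ℝ) • x‖ ^ 2 = 4 * ‖x‖ ^ 2 := by rw [norm_smul, mul_pow]; norm_num
  rw [hb] at e1 e2 e3
  have hs : ∑ i, fderiv ℝ qy y (EuclideanSpace.single i (1:ℝ)) *
      fderiv ℝ (fun y => (Dq x y + ε)⁻¹) y (EuclideanSpace.single i (1:ℝ)) =
      4 * ((Dq x y + ε)⁻¹) ^ 2 * (‖x‖ ^ 2 * ‖y‖ ^ 2 - inner ℝ x y) := by
    simp only [f1, f2]
    rw [EuclideanSpace.real_norm_sq_eq y, PiLp.inner_apply]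
    simp [Fin.sum_univ_four]
    ring
  rw [hs, e1, e2, e3, e4, qy_eq]
  unfold Rp
  ring

/-- the harmonic part of the Laplacian of the Green function -/
def Hx (x y : E4) : ℝ :=
  (4 * ‖x‖ ^ 2) * (Dq x y + 0)⁻¹ + (8 * (1 - ‖x‖ ^ 2)) * (quad 0 x (-1) y * (-((Dq x y + 0)⁻¹) ^ 2))

lemma Hx_eq_Rp {x : E4} (hx : x ∈ B1) {y : E4} (hy : y ∈ CB) : Rp x 0 y = Hx x y := by
  have hD : Dq x y ≠ 0 := (Dq_pos hx hy).ne'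
  unfold Rp Hx
  have h1 : Dq x y = ‖x‖ ^ 2 * ‖y‖ ^ 2 - 2 * inner ℝ x y + 1 := by
    unfold Dq quad; rw [inner_smul_left]; simp; ring
  have h2 : quad 0 x (-1) y = inner ℝ x y - 1 := by unfold quad; ring
  have h3 : ‖x‖ ^ 2 * ‖y‖ ^ 2 = Dq x y + 2 * inner ℝ x y - 1 := by rw [h1]; ring
  rw [h2, h3]
  simp only [add_zero]
  field_simp
  ring

lemma hasDerivAt_two_inv_cube (t : ℝ) (h : t + 0 ≠ 0) :
    HasDerivAt (fun t : ℝ => 2 * ((t + 0)⁻¹) ^ 3) (-6 * ((t + 0)⁻¹) ^ 4) t := by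
  have := ((hasDerivAt_inv_add 0 t h).pow 3).const_mul 2
  exact this.congr_deriv (by norm_num only [Nat.cast_ofNat]; ring)

lemma lap_Hx {x : E4} (hx : x ∈ B1) {y : E4} (hy : y ∈ CB) : lap (Hx x) y = 0 := by
  have hD : Dq x y + 0 ≠ 0 := by have := (Dq_pos hx hy).ne'; simpa
  have c3 := cd_invD hx le_rfl hy (n := 2)
  have c4 : ContDiffAt ℝ 2 (quad 0 x (-1)) y := (quad_contDiff _ _ _).contDiffAt
  have c5 : ContDiffAt ℝ 2 (fun y => -((Dq x y + 0)⁻¹) ^ 2) y := (c3.pow 2).neg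
  unfold Hx
  rw [lap_add (contDiffAt_const.mul c3) (contDiffAt_const.mul (c4.mul c5)), lap_const_mul _ c3,
    lap_const_mul _ (c4.mul c5), lap_mul c4 c5, lap_quad]
  have hb : ‖(-2:ℝ) • x‖ ^ 2 = 4 * ‖x‖ ^ 2 := by rw [norm_smul, mul_pow]; norm_num
  have e3 : lap (fun y => (Dq x y + 0)⁻¹) y = 2 * ((Dq x y + 0)⁻¹) ^ 3 * (4 * ‖x‖ ^ 2 * (Dq x y - 1) + _) + -((Dq x y + 0)⁻¹) ^ 2 * (8 * ‖x‖ ^ 2) := lap_inv_quad (‖x‖ ^ 2) ((-2:ℝ) • x) 1 0 y hD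
  have e5 : lap (fun y => -((Dq x y + 0)⁻¹) ^ 2) y = (-6 * ((Dq x y + 0)⁻¹) ^ 4) * (4 * ‖x‖ ^ 2 * (Dq x y - 1) + _) + 2 * ((Dq x y + 0)⁻¹) ^ 3 * (8 * ‖x‖ ^ 2) :=
    lap_comp_quad (fun t => -((t + 0)⁻¹) ^ 2) (fun t => 2 * ((t + 0)⁻¹) ^ 3) _ (‖x‖ ^ 2) ((-2:ℝ) • x) 1 y
      ((ev_ne _ _ hD).mono fun t ht => hasDerivAt_neg_inv_sq_add 0 t ht) (hasDerivAt_two_inv_cube _ hD)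
  rw [hb] at e3 e5
  have f1 : ∀ i, fderiv ℝ (quad 0 x (-1)) y (EuclideanSpace.single i (1:ℝ)) = 2 * 0 * y i + x i := fun i => quad_fderiv _ _ _ _ _
  have f2 : ∀ i, fderiv ℝ (fun y => -((Dq x y + 0)⁻¹) ^ 2) y (EuclideanSpace.single i (1:ℝ)) =
      (2 * ((Dq x y + 0)⁻¹) ^ 3) * (2 * ‖x‖ ^ 2 * y i + ((-2:ℝ) • x) i) := fun i =>
    comp_quad_fderiv (fun t => -((t + 0)⁻¹) ^ 2) _ _ _ _ y i (hasDerivAt_neg_inv_sq_add 0 _ hD)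
  have hs : ∑ i, fderiv ℝ (quad 0 x (-1)) y (EuclideanSpace.single i (1:ℝ)) *
      fderiv ℝ (fun y => -((Dq x y + 0)⁻¹) ^ 2) y (EuclideanSpace.single i (1:ℝ)) =
      4 * ((Dq x y + 0)⁻¹) ^ 3 * ‖x‖ ^ 2 * (inner ℝ x y - 1) := by
    simp only [f1, f2]
    rw [EuclideanSpace.real_norm_sq_eq x, PiLp.inner_apply]
    simp [Fin.sum_univ_four]
    ring
  rw [hs, e3, e5]
  have h2 : quad 0 x (-1) y = inner ℝ x y - 1 := by unfold quad; ring
  rw [h2]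
  simp only [add_zero] at hD ⊢
  field_simp
  ring

lemma Geps_sphere {x : E4} (hx : x ∈ B1) {ε : ℝ} (hε : 0 < ε) {y : E4} (hy : ‖y‖ = 1) :
    Geps x ε y = 0 ∧ fderivWithin ℝ (Geps x ε) CB y = 0 := by
  have hyC : y ∈ CB := by simp [hy]
  have hDt : Dq x y = tq x y := by rw [Dq_eq, tq_eq, hy]; ring
  have hq : qy y = 0 := by rw [qy_eq, hy]; ring
  have ht : tq x y + ε ≠ 0 := by have := tq_nonneg x y; positivity
  have hD : Dq x y + ε ≠ 0 := by have := Dq_pos hx hyC; positivity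
  constructor
  · unfold Geps; rw [hDt, hq]; ring
  have hd : DifferentiableAt ℝ (Geps x ε) y := (Geps_contDiffAt hx hε hyC (n := 1)).differentiableAt one_ne_zero
  rw [hd.fderivWithin (uniqueDiffOn_CB y hyC)]
  have c1 := (cd_logt x hε y (n := 1)).differentiableAt one_ne_zero
  have c2 := (cd_logD hx hε.le hyC (n := 1)).differentiableAt one_ne_zero
  have c3 := (cd_invD hx hε.le hyC (n := 1)).differentiableAt one_ne_zero
  have c4 : DifferentiableAt ℝ qy y := (qy_contDiff.contDiffAt (n := 1)).differentiableAt one_ne_zero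
  have hi : ∀ i, fderiv ℝ (Geps x ε) y (EuclideanSpace.single i (1:ℝ)) = 0 := by
    intro i
    unfold Geps
    rw [fderiv_fun_add (c1.const_mul _) (c2.fun_add ((c4.fun_mul c3).const_mul _)), fderiv_fun_add c2 ((c4.fun_mul c3).const_mul _),
      fderiv_const_mul c1, fderiv_const_mul (c4.fun_mul c3), fderiv_fun_mul c4 c3]
    simp only [_root_.add_apply, _root_.smul_apply, smul_eq_mul]
    have f0 : fderiv ℝ (fun y => Real.log (tq x y + ε)) y (EuclideanSpace.single i (1:ℝ)) = (tq x y + ε)⁻¹ * (2 * 1 * y i + ((-2:ℝ) • x) i) :=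
      comp_quad_fderiv (fun t => Real.log (t + ε)) _ _ _ _ y i (hasDerivAt_log_add ε _ ht)
    have f1 : fderiv ℝ (fun y => Real.log (Dq x y + ε)) y (EuclideanSpace.single i (1:ℝ)) = (Dq x y + ε)⁻¹ * (2 * ‖x‖ ^ 2 * y i + ((-2:ℝ) • x) i) :=
      comp_quad_fderiv (fun t => Real.log (t + ε)) _ _ _ _ y i (hasDerivAt_log_add ε _ hD)
    have f2 : fderiv ℝ qy y (EuclideanSpace.single i (1:ℝ)) = 2 * (-1) * y i + (0 : E4) i := quad_fderiv _ _ _ _ _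
    rw [f0, f1, f2, hDt, hq]
    simp
    ring
  ext v
  have hv : v = ∑ i, v i • EuclideanSpace.single i (1:ℝ) := by
    ext j
    simp [Fin.sum_univ_four]
    fin_cases j <;> simp
  rw [hv, map_sum]
  simp [hi]





lemma vol_ball : (volume : Measure E4).real B1 = Real.pi ^ 2 / 2 := by
  unfold Measure.real
  rw [InnerProductSpace.volume_ball_of_dim_even (k := 2) (by simp)]
  simp [ENNReal.toReal_ofReal, Real.pi_pos.le]
  positivity

lemma radial_integral (f : ℝ → ℝ) : ∫ x : E4, f ‖x‖ = 2 * Real.pi ^ 2 * ∫ r in Set.Ioi (0:ℝ), r ^ 3 * f r := by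
  rw [integral_fun_norm_addHaar volume f, vol_ball]
  simp
  ring

lemma kernel_1d : ∫ r in Set.Ioi (0:ℝ), r ^ 3 * ((1 + r ^ 2)⁻¹) ^ 3 = 1 / 4 := by
  have hd : ∀ r ∈ Set.Ioi (0:ℝ), HasDerivAt (fun r : ℝ => r ^ 4 / (4 * (1 + r ^ 2) ^ 2)) (r ^ 3 * ((1 + r ^ 2)⁻¹) ^ 3) r := by
    intro r hr
    have h1 : HasDerivAt (fun r : ℝ => r ^ 4) (4 * r ^ 3) r := by simpa using hasDerivAt_pow 4 r
    have h2 : HasDerivAt (fun r : ℝ => 4 * (1 + r ^ 2) ^ 2) (4 * (2 * (1 + r ^ 2) * (2 * r))) r := by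
      have h3 : HasDerivAt (fun r : ℝ => 1 + r ^ 2) (2 * r) r := by
        simpa using (hasDerivAt_pow 2 r).const_add 1
      simpa using (h3.pow 2).const_mul 4
    have hne : 4 * (1 + r ^ 2) ^ 2 ≠ 0 := by positivity
    refine (h1.div h2 hne).congr_deriv ?_
    have : 1 + r ^ 2 ≠ 0 := by positivity
    field_simp
    ring
  have hlim : Tendsto (fun r : ℝ => r ^ 4 / (4 * (1 + r ^ 2) ^ 2)) atTop (nhds (1 / 4)) := by
    have h0 : Tendsto (fun r : ℝ => (r ^ 2)⁻¹) atTop (nhds 0) := (tendsto_pow_atTop two_ne_zero).inv_tendsto_atTop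
    have h1 : Tendsto (fun r : ℝ => 1 / (4 * ((r ^ 2)⁻¹ + 1) ^ 2)) atTop (nhds (1 / (4 * (0 + 1) ^ 2))) :=
      tendsto_const_nhds.div (((h0.add_const 1).pow 2).const_mul 4) (by norm_num)
    norm_num at h1
    refine (Tendsto.congr' ?_ h1)
    filter_upwards [eventually_gt_atTop 0] with r hr
    field_simp
  have := integral_Ioi_of_hasDerivAt_of_nonneg' (g := fun r : ℝ => r ^ 4 / (4 * (1 + r ^ 2) ^ 2)) (a := 0) (l := 1 / 4)
    (g' := fun r => r ^ 3 * ((1 + r ^ 2)⁻¹) ^ 3) ?_ ?_ hlim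
  · rw [this]; norm_num
  · intro r hr
    rcases eq_or_lt_of_le (show (0:ℝ) ≤ r from hr) with h | h
    · subst h
      have h1 : HasDerivAt (fun r : ℝ => r ^ 4) 0 0 := by simpa using hasDerivAt_pow 4 (0:ℝ)
      have h2 : HasDerivAt (fun r : ℝ => 4 * (1 + r ^ 2) ^ 2) 0 0 := by
        have h3 : HasDerivAt (fun r : ℝ => 1 + r ^ 2) 0 0 := by
          simpa using (hasDerivAt_pow 2 (0:ℝ)).const_add 1
        simpa using (h3.pow 2).const_mul 4
      exact (h1.div h2 (by norm_num)).congr_deriv (by simp)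
    · exact hd r h
  · intro r hr
    have : (0:ℝ) < r := hr
    positivity

def kern (z : E4) : ℝ := 2 / Real.pi ^ 2 * ((1 + ‖z‖ ^ 2)⁻¹) ^ 3

lemma kern_int : ∫ z, kern z = 1 := by
  unfold kern
  rw [radial_integral (fun r => 2 / Real.pi ^ 2 * ((1 + r ^ 2)⁻¹) ^ 3)]
  have : ∀ r : ℝ, r ^ 3 * (2 / Real.pi ^ 2 * ((1 + r ^ 2)⁻¹) ^ 3) = 2 / Real.pi ^ 2 * (r ^ 3 * ((1 + r ^ 2)⁻¹) ^ 3) := fun r => by ring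
  simp only [this]
  rw [integral_const_mul, kernel_1d]
  have := Real.pi_ne_zero
  field_simp; norm_num

lemma kern_decay : Tendsto (fun z : E4 => ‖z‖ ^ Module.finrank ℝ E4 * kern z) (Bornology.cobounded E4) (nhds 0) := by
  have h0 : Tendsto (fun z : E4 => (‖z‖ ^ 2)⁻¹) (Bornology.cobounded E4) (nhds 0) :=
    ((tendsto_pow_atTop two_ne_zero).comp tendsto_norm_cobounded_atTop).inv_tendsto_atTop
  have h1 := h0.const_mul (2 / Real.pi ^ 2)
  rw [mul_zero] at h1
  refine squeeze_zero (fun z => ?_) (fun z => ?_) h1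
  · unfold kern; positivity
  · have hf : Module.finrank ℝ E4 = 4 := by simp
    rw [hf]
    unfold kern
    rcases eq_or_ne z 0 with rfl | hz
    · simp
    have hz : 0 < ‖z‖ := norm_pos_iff.2 hz
    rw [mul_left_comm]
    gcongr
    rw [← inv_pow, ← one_div, ← one_div, div_pow, div_pow, one_pow, one_pow, mul_one_div, div_le_div_iff₀ (by positivity) (by positivity)]
    nlinarith [sq_nonneg (‖z‖), pow_pos hz 4, pow_pos hz 6]

lemma approx_id {g : E4 → ℝ} (hg : Integrable g) (hc : Continuous g) (x : E4) :
    Tendsto (fun c : ℝ => ∫ y, g y * (32 * (c ^ 2)⁻¹ * ((tq x y + (c ^ 2)⁻¹)⁻¹) ^ 3)) atTop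
      (nhds (16 * Real.pi ^ 2 * g x)) := by
  have h := tendsto_integral_comp_smul_smul_of_integrable' (μ := volume) (φ := kern)
    (fun x => by unfold kern; positivity) kern_int kern_decay hg (hc.continuousAt (x := x))
  have h2 := h.const_mul (16 * Real.pi ^ 2)
  refine h2.congr' ?_
  filter_upwards [eventually_gt_atTop 0] with c hc0
  rw [← integral_const_mul]
  congr 1
  ext y
  have hf : Module.finrank ℝ E4 = 4 := by simp
  rw [hf, tq_eq]
  unfold kern
  rw [norm_smul, Real.norm_of_nonneg hc0.le, smul_eq_mul]
  have hp := Real.pi_ne_zero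
  have h1 : ‖x - y‖ ^ 2 + (c ^ 2)⁻¹ = (c ^ 2)⁻¹ * (1 + (c * ‖x - y‖) ^ 2) := by
    field_simp; ring
  rw [h1, mul_inv]
  have : 1 + (c * ‖x - y‖) ^ 2 ≠ 0 := by positivity
  field_simp
  ring

lemma inv_sq_integrable {x : E4} (hx : x ∈ CB) : IntegrableOn (fun y => (tq x y)⁻¹) B1 := by
  have h1 : IntegrableOn (fun z : E4 => (‖z‖ ^ 2)⁻¹) (ball (0:E4) 3) := by
    rw [integrableOn_fun_norm_addHaar volume (f := fun r => (r ^ 2)⁻¹)]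
    have : IntegrableOn (fun y : ℝ => y) (Set.Ioo 0 3) :=
      (continuous_id.integrableOn_Icc (a := 0) (b := 3)).mono_set Set.Ioo_subset_Icc_self
    refine this.congr_fun (fun r hr => ?_) measurableSet_Ioo
    have : r ≠ 0 := hr.1.ne'
    simp; field_simp
  have h2 := (integrable_indicator_iff measurableSet_ball).2 h1
  have h3 := (h2.comp_sub_left x).integrableOn (s := B1)
  refine h3.congr_fun (fun y hy => ?_) measurableSet_ball
  have : x - y ∈ ball (0:E4) 3 := by
    simp at hx hy ⊢
    linarith [norm_sub_le x y]
  simp only [Set.indicator_of_mem this, tq_eq]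

lemma hB_nonneg {s : ℝ} (hs : 0 ≤ s) : 0 ≤ hB s := by
  unfold hB
  have h := Real.one_sub_inv_le_log_of_pos (show 0 < 1 + s by linarith)
  have : s / (1 + s) = 1 - (1 + s)⁻¹ := by field_simp; ring
  linarith

lemma hB_le_log {s : ℝ} (hs : 0 ≤ s) : hB s ≤ Real.log (1 + s) := by
  unfold hB
  have : 0 ≤ s / (1 + s) := by positivity
  linarith

lemma hB_le {s : ℝ} (hs : 0 ≤ s) : hB s ≤ s := by
  refine (hB_le_log hs).trans ?_
  have := Real.log_le_sub_one_of_pos (show 0 < 1 + s by linarith)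
  linarith

lemma hB_contAt {s : ℝ} (hs : 0 ≤ s) : ContinuousAt hB s := by
  unfold hB
  have : 1 + s ≠ 0 := by positivity
  exact ((continuousAt_const.add continuousAt_id).log this).sub (continuousAt_id.div (continuousAt_const.add continuousAt_id) this)

lemma pq_bounds {x y : E4} (hx : x ∈ CB) (hy : y ∈ CB) :
    0 ≤ (1 - ‖x‖ ^ 2) * (1 - ‖y‖ ^ 2) ∧ (1 - ‖x‖ ^ 2) * (1 - ‖y‖ ^ 2) ≤ 1 := by
  simp at hx hy
  have h1 : 0 ≤ 1 - ‖x‖ ^ 2 := by nlinarith [norm_nonneg x]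
  have h2 : 0 ≤ 1 - ‖y‖ ^ 2 := by nlinarith [norm_nonneg y]
  exact ⟨mul_nonneg h1 h2, mul_le_one₀ (by nlinarith [norm_nonneg x]) h2 (by nlinarith [norm_nonneg y])⟩

lemma Geps_eq {x y : E4} (hx : x ∈ B1) (hy : y ∈ B1) {ε : ℝ} (hε : 0 < ε) :
    Geps x ε y = hB ((1 - ‖x‖ ^ 2) * (1 - ‖y‖ ^ 2) / (tq x y + ε)) := by
  have ht : 0 < tq x y + ε := by have := tq_nonneg x y; positivity
  have hD : 0 < Dq x y + ε := by have := Dq_pos hx (ball_subset_closedBall hy); positivity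
  have hDt : Dq x y = tq x y + (1 - ‖x‖ ^ 2) * (1 - ‖y‖ ^ 2) := by rw [Dq_eq, tq_eq]
  unfold Geps hB
  have e : 1 + (1 - ‖x‖ ^ 2) * (1 - ‖y‖ ^ 2) / (tq x y + ε) = (Dq x y + ε) / (tq x y + ε) := by
    rw [hDt]; field_simp; ring
  rw [e, Real.log_div hD.ne' ht.ne', qy_eq]
  field_simp
  ring

lemma GB_eq (x y : E4) : GB x y = hB ((1 - ‖x‖ ^ 2) * (1 - ‖y‖ ^ 2) / tq x y) := by
  rw [tq_eq]; rfl

lemma GB_nonneg {x y : E4} (hx : x ∈ CB) (hy : y ∈ CB) : 0 ≤ GB x y :=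
  hB_nonneg (div_nonneg (pq_bounds hx hy).1 (by positivity))

lemma GB_le {x y : E4} (hx : x ∈ CB) (hy : y ∈ CB) : GB x y ≤ (tq x y)⁻¹ := by
  rw [GB_eq]
  have hp := pq_bounds hx hy
  have ht := tq_nonneg x y
  refine (hB_le (div_nonneg hp.1 ht)).trans ?_
  rw [div_eq_mul_inv]
  exact mul_le_of_le_one_left (by positivity) hp.2

lemma Geps_le {x y : E4} (hx : x ∈ B1) (hy : y ∈ B1) {ε : ℝ} (hε : 0 < ε) (hxy : x ≠ y) :
    ‖Geps x ε y‖ ≤ (tq x y)⁻¹ := by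
  have hp := pq_bounds (ball_subset_closedBall hx) (ball_subset_closedBall hy)
  have ht : 0 < tq x y := by rw [tq_eq]; have := norm_pos_iff.2 (sub_ne_zero.2 hxy); positivity
  rw [Geps_eq hx hy hε]
  have hs : 0 ≤ (1 - ‖x‖ ^ 2) * (1 - ‖y‖ ^ 2) / (tq x y + ε) := div_nonneg hp.1 (by positivity)
  rw [Real.norm_of_nonneg (hB_nonneg hs)]
  refine (hB_le hs).trans ?_
  rw [← one_div, div_le_div_iff₀ (by positivity) ht]
  nlinarith

lemma eps_tendsto : Tendsto (fun c : ℝ => (c ^ 2)⁻¹) atTop (nhds 0) :=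
  (tendsto_pow_atTop two_ne_zero).inv_tendsto_atTop

lemma ae_ne (x : E4) : ∀ᵐ y ∂(volume.restrict B1), y ∈ B1 ∧ x ≠ y := by
  have h1 : ∀ᵐ y ∂(volume.restrict B1), y ∈ B1 := ae_restrict_mem measurableSet_ball
  have h2 : ∀ᵐ y ∂(volume.restrict B1), y ≠ x := by
    apply ae_restrict_of_ae
    have : volume ({x} : Set E4) = 0 := measure_singleton x
    filter_upwards [measure_eq_zero_iff_ae_notMem.1 this] with y hy using by simpa using hy
  filter_upwards [h1, h2] with y a b using ⟨a, b.symm⟩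

lemma bound_CB {f : E4 → ℝ} (hf : ContinuousOn f CB) : ∃ C, 0 ≤ C ∧ ∀ y ∈ CB, ‖f y‖ ≤ C := by
  obtain ⟨C, hC⟩ := (isCompact_closedBall (0:E4) 1).exists_bound_of_continuousOn hf
  exact ⟨max C 0, le_max_right _ _, fun y hy => (hC y hy).trans (le_max_left _ _)⟩

lemma Rp_bound {x : E4} (hx : x ∈ B1) : ∃ C, 0 ≤ C ∧ ∀ ε ∈ Set.Icc (0:ℝ) 1, ∀ y ∈ CB, ‖Rp x ε y‖ ≤ C := by
  have hDc : Continuous (Dq x) := (Dq_contDiff x (n := 1)).continuous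
  have hD : ContinuousOn (fun p : ℝ × E4 => Dq x p.2) (Set.Icc (0:ℝ) 1 ×ˢ CB) := (hDc.comp continuous_snd).continuousOn
  have hI : ContinuousOn (fun p : ℝ × E4 => (Dq x p.2 + p.1)⁻¹) (Set.Icc (0:ℝ) 1 ×ˢ CB) := by
    refine ContinuousOn.inv₀ (hD.add continuous_fst.continuousOn) ?_
    rintro ⟨ε, y⟩ ⟨h1, h2⟩
    have := Dq_pos hx h2
    have := h1.1
    simp only at *
    positivity
  have hc : ContinuousOn (fun p : ℝ × E4 => Rp x p.1 p.2) (Set.Icc (0:ℝ) 1 ×ˢ CB) := by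
    unfold Rp
    have hy : ContinuousOn (fun p : ℝ × E4 => ‖p.2‖ ^ 2) (Set.Icc (0:ℝ) 1 ×ˢ CB) := by fun_prop
    have hin : ContinuousOn (fun p : ℝ × E4 => inner ℝ x p.2) (Set.Icc (0:ℝ) 1 ×ˢ CB) := by fun_prop
    fun_prop
  obtain ⟨C, hC⟩ := (isCompact_Icc.prod (isCompact_closedBall (0:E4) 1)).exists_bound_of_continuousOn hc
  exact ⟨max C 0, le_max_right _ _, fun ε hε y hy => (hC (ε, y) ⟨hε, hy⟩).trans (le_max_left _ _)⟩

lemma tendsto_Rp {x y : E4} (hx : x ∈ B1) (hy : y ∈ CB) : Tendsto (fun c : ℝ => Rp x ((c ^ 2)⁻¹) y) atTop (nhds (Hx x y)) := by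
  rw [← Hx_eq_Rp hx hy]
  have h := Dq_pos hx hy
  have hI : ContinuousAt (fun ε => (Dq x y + ε)⁻¹) 0 :=
    (continuousAt_const.add continuousAt_id).inv₀ (by simpa using h.ne')
  have : ContinuousAt (fun ε => Rp x ε y) 0 := by
    unfold Rp; fun_prop
  exact this.tendsto.comp eps_tendsto





lemma tq_pos {x y : E4} (hxy : x ≠ y) : 0 < tq x y := by
  rw [tq_eq]; have := norm_pos_iff.2 (sub_ne_zero.2 hxy); positivity

lemma dct_aux {F : ℝ → E4 → ℝ} {f g : E4 → ℝ} {x : E4} (hx : x ∈ B1) (hg : ContinuousOn g CB) (C : ℝ)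
    (hC : 0 ≤ C)
    (hF : ∀ᶠ c in atTop, ContinuousOn (F c) CB)
    (hb : ∀ᶠ c in atTop, ∀ y ∈ B1, x ≠ y → ‖F c y‖ ≤ 12 * (tq x y)⁻¹ + C)
    (hl : ∀ y ∈ B1, x ≠ y → Tendsto (fun c => F c y) atTop (nhds (f y))) :
    Tendsto (fun c => ∫ y in B1, g y * F c y) atTop (nhds (∫ y in B1, g y * f y)) := by
  obtain ⟨K, hK0, hK⟩ := bound_CB hg
  apply tendsto_integral_filter_of_dominated_convergence (fun y => K * (12 * (tq x y)⁻¹ + C))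
  · filter_upwards [hF] with c hc
    exact (contOn_integrable (hg.mul hc)).aestronglyMeasurable
  · filter_upwards [hb] with c hc
    filter_upwards [ae_ne x] with y hy
    rw [norm_mul]
    exact mul_le_mul (hK y (ball_subset_closedBall hy.1)) (hc y hy.1 hy.2) (norm_nonneg _) hK0
  · apply Integrable.const_mul
    exact (Integrable.const_mul (inv_sq_integrable (ball_subset_closedBall hx)) 12).add (contOn_integrable continuousOn_const)
  · filter_upwards [ae_ne x] with y hy
    exact (hl y hy.1 hy.2).const_mul _

lemma eps_ev : ∀ᶠ c : ℝ in atTop, 0 < (c ^ 2)⁻¹ ∧ (c ^ 2)⁻¹ ≤ 1 := by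
  filter_upwards [eventually_ge_atTop 1] with c hc
  exact ⟨by positivity, inv_le_one_of_one_le₀ (by nlinarith)⟩

lemma tinv_tendsto {x y : E4} (hxy : x ≠ y) :
    Tendsto (fun c : ℝ => (tq x y + (c ^ 2)⁻¹)⁻¹) atTop (nhds (tq x y)⁻¹) := by
  have h := (eps_tendsto.const_add (tq x y)).inv₀ (by simpa using (tq_pos hxy).ne')
  simpa using h

lemma Geps_tendsto {x y : E4} (hx : x ∈ B1) (hy : y ∈ B1) (hxy : x ≠ y) :
    Tendsto (fun c : ℝ => Geps x ((c ^ 2)⁻¹) y) atTop (nhds (GB x y)) := by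
  rw [GB_eq]
  have hp := (pq_bounds (ball_subset_closedBall hx) (ball_subset_closedBall hy)).1
  have h1 := (hB_contAt (div_nonneg hp (tq_nonneg x y))).tendsto.comp
    ((tinv_tendsto hxy).const_mul ((1 - ‖x‖ ^ 2) * (1 - ‖y‖ ^ 2)))
  refine h1.congr' ?_
  filter_upwards [eps_ev] with c hc
  rw [Geps_eq hx hy hc.1]; rfl

lemma Hx_contDiffAt {x y : E4} (hx : x ∈ B1) (hy : y ∈ CB) {n : WithTop ℕ∞} : ContDiffAt ℝ n (Hx x) y := by
  unfold Hx
  have c3 := cd_invD hx le_rfl hy (n := n)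
  exact (contDiffAt_const.mul c3).add (contDiffAt_const.mul ((quad_contDiff _ _ _).contDiffAt.mul (c3.pow 2).neg))

/-- regularized kernel for the second application of Green's identity -/
def Keps (x : E4) (ε : ℝ) (y : E4) : ℝ := (-4) * (tq x y + ε)⁻¹ + Hx x y

lemma cd_tinv (x : E4) {ε : ℝ} (hε : 0 < ε) (y : E4) {n : WithTop ℕ∞} :
    ContDiffAt ℝ n (fun y => (tq x y + ε)⁻¹) y :=
  ((tq_contDiff x).contDiffAt.add contDiffAt_const).inv (by have := tq_nonneg x y; positivity)

lemma lap_Keps {x y : E4} (hx : x ∈ B1) (hy : y ∈ CB) {ε : ℝ} (hε : 0 < ε) :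
    lap (Keps x ε) y = 32 * ε * ((tq x y + ε)⁻¹) ^ 3 := by
  have ht : tq x y + ε ≠ 0 := by have := tq_nonneg x y; positivity
  unfold Keps
  rw [lap_add (contDiffAt_const.mul (cd_tinv x hε y)) (Hx_contDiffAt hx hy), lap_const_mul _ (cd_tinv x hε y), lap_Hx hx hy]
  have e3 := lap_inv_quad 1 ((-2:ℝ) • x) (‖x‖ ^ 2) ε y ht
  have hb : ‖(-2:ℝ) • x‖ ^ 2 = 4 * ‖x‖ ^ 2 := by rw [norm_smul, mul_pow]; norm_num
  have e4 : lap (fun y => (tq x y + ε)⁻¹) y = 2 * ((tq x y + ε)⁻¹) ^ 3 * (4 * 1 * (tq x y - ‖x‖ ^ 2) + ‖(-2:ℝ) • x‖ ^ 2) + -((tq x y + ε)⁻¹) ^ 2 * (8 * 1) := e3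
  rw [e4, hb]
  field_simp
  ring

theorem green_rep {u : E4 → ℝ} (hu : ContDiffOn ℝ 4 u CB)
    (h0 : ∀ x, ‖x‖ = 1 → u x = 0) (h1 : ∀ x, ‖x‖ = 1 → fderivWithin ℝ u CB x = 0)
    {x : E4} (hx : x ∈ B1) {f : E4 → ℝ} (hf : ∀ y ∈ B1, lap (lap u) y = f y) :
    ∫ y in B1, f y * GB x y = 16 * Real.pi ^ 2 * u x := by
  have hxC := ball_subset_closedBall hx
  have hv : ContDiffOn ℝ 2 (lapW u) CB := lapW_contDiffOn (m := 3) hu (by norm_num) (by norm_num)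
  have hvv : ContDiffOn ℝ 0 (lapW (lapW u)) CB := lapW_contDiffOn (m := 1) hv (by norm_num) (by norm_num)
  have hu2 : ContDiffOn ℝ 2 u CB := hu.of_le (by norm_num)
  have hGc : ∀ ε > 0, ContDiffOn ℝ 2 (Geps x ε) CB := fun ε hε y hy => (Geps_contDiffAt hx hε hy).contDiffWithinAt
  have hKc : ∀ ε > 0, ContDiffOn ℝ 2 (Keps x ε) CB := fun ε hε y hy =>
    ((contDiffAt_const.mul (cd_tinv x hε y)).add (Hx_contDiffAt hx hy)).contDiffWithinAt
  have hfv : ∀ y ∈ B1, lapW (lapW u) y = f y := fun y hy => by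
    rw [lapW_eq _ hy, lap_lapW_eq _ hy, hf y hy]
  -- step A
  have A : Tendsto (fun c : ℝ => ∫ y in B1, lapW (lapW u) y * Geps x ((c ^ 2)⁻¹) y) atTop
      (nhds (∫ y in B1, lapW (lapW u) y * GB x y)) := by
    refine dct_aux hx hvv.continuousOn 0 le_rfl ?_ ?_ fun y hy hxy => Geps_tendsto hx hy hxy
    · filter_upwards [eps_ev] with c hc using (hGc _ hc.1).continuousOn
    · filter_upwards [eps_ev] with c hc y hy hxy
      refine (Geps_le hx hy hc.1 hxy).trans ?_
      have := inv_pos.2 (tq_pos hxy); linarith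
  obtain ⟨CR, hCR0, hCR⟩ := Rp_bound hx
  -- step C
  have hRc : ∀ c : ℝ, 0 < (c ^ 2)⁻¹ → ContinuousOn (fun y => 4 * tq x y * ((tq x y + (c ^ 2)⁻¹)⁻¹) ^ 2 - 8 * (tq x y + (c ^ 2)⁻¹)⁻¹ + Rp x ((c ^ 2)⁻¹) y) CB := by
    intro c hc y hy
    have hD := cd_invD hx hc.le hy (n := 1) |>.continuousAt
    have hD1 := (Dq_contDiff x (n := 1)).continuous.continuousAt (x := y)
    have ht := cd_tinv x hc y (n := 1) |>.continuousAt
    have ht1 := (tq_contDiff x (n := 1)).continuous.continuousAt (x := y)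
    apply ContinuousAt.continuousWithinAt
    unfold Rp
    fun_prop
  have C : Tendsto (fun c : ℝ => ∫ y in B1, lapW u y * (4 * tq x y * ((tq x y + (c ^ 2)⁻¹)⁻¹) ^ 2 - 8 * (tq x y + (c ^ 2)⁻¹)⁻¹ + Rp x ((c ^ 2)⁻¹) y)) atTop
      (nhds (∫ y in B1, lapW u y * (-4 * (tq x y)⁻¹ + Hx x y))) := by
    refine dct_aux hx hv.continuousOn CR hCR0 ?_ ?_ ?_
    · filter_upwards [eps_ev] with c hc using hRc c hc.1
    · filter_upwards [eps_ev] with c hc y hy hxy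
      have b1 := hCR _ ⟨hc.1.le, hc.2⟩ y (ball_subset_closedBall hy)
      have tp := tq_pos hxy
      have b2 : (tq x y + (c ^ 2)⁻¹)⁻¹ ≤ (tq x y)⁻¹ := by
        gcongr; linarith [hc.1]
      have b2' : 0 < (tq x y + (c ^ 2)⁻¹)⁻¹ := by have := hc.1; positivity
      have b3 : tq x y * (tq x y + (c ^ 2)⁻¹)⁻¹ ≤ 1 := by
        rw [← div_eq_mul_inv, div_le_one (by have := hc.1; positivity)]; linarith [hc.1]
      have b4 : tq x y * ((tq x y + (c ^ 2)⁻¹)⁻¹) ^ 2 ≤ (tq x y)⁻¹ := by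
        calc _ = (tq x y * (tq x y + (c ^ 2)⁻¹)⁻¹) * (tq x y + (c ^ 2)⁻¹)⁻¹ := by ring
          _ ≤ 1 * (tq x y)⁻¹ := by gcongr
          _ = _ := one_mul _
      have b5 : 0 ≤ tq x y * ((tq x y + (c ^ 2)⁻¹)⁻¹) ^ 2 := by positivity
      rw [Real.norm_eq_abs, abs_le] at b1 ⊢
      constructor <;> nlinarith [b1.1, b1.2]
    · intro y hy hxy
      have tp := tq_pos hxy
      have := ((((tinv_tendsto hxy).pow 2).const_mul (4 * tq x y)).sub ((tinv_tendsto hxy).const_mul 8)).add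
        (tendsto_Rp hx (ball_subset_closedBall hy))
      convert this using 2
      field_simp
      ring
  have D : Tendsto (fun c : ℝ => ∫ y in B1, lapW u y * Keps x ((c ^ 2)⁻¹) y) atTop
      (nhds (∫ y in B1, lapW u y * (-4 * (tq x y)⁻¹ + Hx x y))) := by
    obtain ⟨CH, hCH0, hCH⟩ := bound_CB (f := Hx x) (fun y hy => (Hx_contDiffAt hx hy (n := 1)).continuousAt.continuousWithinAt)
    refine dct_aux hx hv.continuousOn CH hCH0 ?_ ?_ ?_
    · filter_upwards [eps_ev] with c hc using (hKc _ hc.1).continuousOn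
    · filter_upwards [eps_ev] with c hc y hy hxy
      have b1 := hCH y (ball_subset_closedBall hy)
      have tp := tq_pos hxy
      have b2 : (tq x y + (c ^ 2)⁻¹)⁻¹ ≤ (tq x y)⁻¹ := by
        gcongr; linarith [hc.1]
      have b2' : 0 < (tq x y + (c ^ 2)⁻¹)⁻¹ := by have := hc.1; positivity
      unfold Keps
      rw [Real.norm_eq_abs, abs_le] at b1 ⊢
      constructor <;> linarith [b1.1, b1.2]
    · intro y hy hxy
      unfold Keps
      exact ((tinv_tendsto hxy).const_mul (-4)).add_const _
  -- identities
  have I1 : ∀ᶠ c : ℝ in atTop, ∫ y in B1, lapW (lapW u) y * Geps x ((c ^ 2)⁻¹) y =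
      ∫ y in B1, lapW u y * (4 * tq x y * ((tq x y + (c ^ 2)⁻¹)⁻¹) ^ 2 - 8 * (tq x y + (c ^ 2)⁻¹)⁻¹ + Rp x ((c ^ 2)⁻¹) y) := by
    filter_upwards [eps_ev] with c hc
    have := green (hGc _ hc.1) hv (fun y hy => (Geps_sphere hx hc.1 hy).1) (fun y hy => (Geps_sphere hx hc.1 hy).2)
    rw [setIntegral_congr_fun measurableSet_ball (g := fun y => Geps x ((c ^ 2)⁻¹) y * lap (lapW u) y)]
    · rw [this]
      refine setIntegral_congr_fun measurableSet_ball fun y hy => ?_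
      simp only [lap_Geps hx hc.1 (ball_subset_closedBall hy)]
    · intro y hy
      simp only [lapW_eq (lapW u) hy]; ring
  have I2 : ∀ᶠ c : ℝ in atTop, ∫ y in B1, lapW u y * Keps x ((c ^ 2)⁻¹) y =
      ∫ y, Set.indicator CB u y * (32 * (c ^ 2)⁻¹ * ((tq x y + (c ^ 2)⁻¹)⁻¹) ^ 3) := by
    filter_upwards [eps_ev] with c hc
    have := green hu2 (hKc _ hc.1) h0 h1
    rw [setIntegral_congr_fun measurableSet_ball (g := fun y => Keps x ((c ^ 2)⁻¹) y * lap u y)]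
    · rw [← this, ← integral_indicator measurableSet_ball]
      congr 1
      ext y
      by_cases hy : y ∈ B1
      · rw [Set.indicator_of_mem hy, Set.indicator_of_mem (ball_subset_closedBall hy), lap_Keps hx (ball_subset_closedBall hy) hc.1]
      · rw [Set.indicator_of_notMem hy]
        by_cases hy2 : y ∈ CB
        · have : ‖y‖ = 1 := by simp at hy hy2; linarith
          rw [Set.indicator_of_mem hy2, h0 y this]; simp
        · rw [Set.indicator_of_notMem hy2]; simp
    · intro y hy
      simp only [lapW_eq u hy]; ring
  obtain ⟨K, hK⟩ := lipschitz_ext u (hu.of_le (by norm_num)) h0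
  have hIntU : Integrable (Set.indicator CB u) := by
    rw [integrable_indicator_iff measurableSet_closedBall]
    exact hu.continuousOn.integrableOn_compact (isCompact_closedBall _ _)
  have E := approx_id hIntU hK.continuous x
  rw [Set.indicator_of_mem hxC] at E
  have e1 := tendsto_nhds_unique (A.congr' I1) C
  have e2 := tendsto_nhds_unique (D.congr' I2) E
  rw [← e2, ← e1]
  refine setIntegral_congr_fun measurableSet_ball fun y hy => ?_
  simp only [hfv y hy]





/-- reflection in the hyperplane `⟪e, x⟫ = μ` -/
def rfl4 (e : E4) (μ : ℝ) (x : E4) : E4 := x - (2 * (inner ℝ e x - μ)) • e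

lemma rfl4_inner {e : E4} (he : ‖e‖ = 1) (μ : ℝ) (x : E4) : inner ℝ e (rfl4 e μ x) = 2 * μ - inner ℝ e x := by
  unfold rfl4
  rw [inner_sub_right, inner_smul_right, real_inner_self_eq_norm_sq, he]; ring

lemma rfl4_invol {e : E4} (he : ‖e‖ = 1) (μ : ℝ) (x : E4) : rfl4 e μ (rfl4 e μ x) = x := by
  rw [show rfl4 e μ (rfl4 e μ x) = rfl4 e μ x - (2 * (inner ℝ e (rfl4 e μ x) - μ)) • e from rfl, rfl4_inner he]
  unfold rfl4
  rw [sub_sub, ← add_smul]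
  have : 2 * (inner ℝ e x - μ) + 2 * (2 * μ - inner ℝ e x - μ) = 0 := by ring
  rw [this]; simp

lemma rfl4_sub {e : E4} (he : ‖e‖ = 1) (μ : ℝ) (x y : E4) : ‖rfl4 e μ x - y‖ ^ 2 =
    ‖x - y‖ ^ 2 + 4 * (inner ℝ e x - μ) * (inner ℝ e y - μ) := by
  have : rfl4 e μ x - y = (x - y) - (2 * (inner ℝ e x - μ)) • e := by unfold rfl4; abel
  rw [this, norm_sub_sq_real, norm_smul, inner_smul_right, real_inner_comm e (x - y), inner_sub_right, he, Real.norm_eq_abs,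
    mul_one, sq_abs]
  ring

lemma rfl4_norm {e : E4} (he : ‖e‖ = 1) (μ : ℝ) (x : E4) : ‖rfl4 e μ x‖ ^ 2 =
    ‖x‖ ^ 2 - 4 * μ * (inner ℝ e x - μ) := by
  have := rfl4_sub he μ x 0
  simp only [sub_zero, inner_zero_right] at this
  rw [this]; ring

lemma rfl4_sub_sub {e : E4} (he : ‖e‖ = 1) (μ : ℝ) (x y : E4) : ‖rfl4 e μ x - rfl4 e μ y‖ ^ 2 = ‖x - y‖ ^ 2 := by
  rw [rfl4_sub he, rfl4_inner he, norm_sub_rev, rfl4_sub he, norm_sub_rev]; ring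

lemma rfl4_mp {e : E4} (he : ‖e‖ = 1) (μ : ℝ) : MeasurePreserving (rfl4 e μ) (volume : Measure E4) volume := by
  have h1 := ((Submodule.reflection (ℝ ∙ e)ᗮ)).measurePreserving
  have h2 := measurePreserving_add_right (volume : Measure E4) ((2 * μ) • e)
  suffices he2 : rfl4 e μ = (fun x => x + (2 * μ) • e) ∘ (Submodule.reflection (ℝ ∙ e)ᗮ) by
    rw [he2]; exact h2.comp h1
  funext x
  simp only [Function.comp]
  rw [Submodule.reflection_orthogonal_apply, Submodule.reflection_singleton_apply, he]
  unfold rfl4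
  simp
  module

lemma rfl4_cont (e : E4) (μ : ℝ) : Continuous (rfl4 e μ) := by unfold rfl4; fun_prop

lemma rfl4_emb {e : E4} (he : ‖e‖ = 1) (μ : ℝ) : MeasurableEmbedding (rfl4 e μ) :=
  (MeasurableEquiv.mk ⟨rfl4 e μ, rfl4 e μ, rfl4_invol he μ, rfl4_invol he μ⟩ (rfl4_cont e μ).measurable
    (rfl4_cont e μ).measurable).measurableEmbedding

lemma hB_deriv {s : ℝ} (hs : 0 ≤ s) : HasDerivAt hB (s / (1 + s) ^ 2) s := by
  have h : (1 + s) ≠ 0 := by positivity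
  have h1 : HasDerivAt (fun s : ℝ => 1 + s) 1 s := (hasDerivAt_id s).const_add 1
  refine ((h1.log h).sub ((hasDerivAt_id s).div h1 h)).congr_deriv ?_
  simp
  field_simp
  ring

lemma hB_strictMono : StrictMonoOn hB (Set.Ici 0) := by
  apply strictMonoOn_of_deriv_pos (convex_Ici 0) (fun s hs => (hB_contAt hs).continuousWithinAt)
  intro s hs
  rw [interior_Ici] at hs
  have hs : 0 < s := hs
  rw [(hB_deriv hs.le).deriv]; positivity

lemma hB_diff_mono {τ : ℝ} (hτ : 1 ≤ τ) : MonotoneOn (fun s => hB s - hB (s / τ)) (Set.Ici 0) := by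
  have hd : ∀ s, 0 ≤ s → HasDerivAt (fun s => hB s - hB (s / τ)) (s / (1 + s) ^ 2 - (s / τ) / (1 + s / τ) ^ 2 * (1 / τ)) s := by
    intro s hs
    exact (hB_deriv hs).sub (HasDerivAt.comp (h₂ := hB) (h := fun s => s / τ) s (hB_deriv (show 0 ≤ s / τ by positivity)) ((hasDerivAt_id s).div_const τ))
  apply monotoneOn_of_deriv_nonneg (convex_Ici 0) (fun s hs => (hd s hs).continuousAt.continuousWithinAt)
  · rw [interior_Ici]; intro s hs; exact (hd s (le_of_lt hs)).differentiableAt.differentiableWithinAt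
  · rw [interior_Ici]; intro s hs
    have hs : 0 < s := hs
    rw [(hd s hs.le).deriv]
    have : (s / τ) / (1 + s / τ) ^ 2 * (1 / τ) = s / (τ + s) ^ 2 := by
      field_simp
    rw [this, sub_nonneg]
    gcongr

/-- the four-point inequality for the Green function -/
lemma four_pt {p p' q q' t T : ℝ} (hp : 0 < p) (hpp : p < p') (hq : 0 < q) (hqq : q ≤ q') (ht : 0 < t) (hT : t ≤ T) :
    hB (p * q / t) + hB (p * q' / T) < hB (p' * q' / t) + hB (p' * q / T) := by
  have hT0 : 0 < T := ht.trans_le hT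
  have h1 : hB (p * q' / t) < hB (p' * q' / t) := hB_strictMono (by simp only [Set.mem_Ici]; have := hq.trans_le hqq; positivity)
    (by simp only [Set.mem_Ici]; have := hq.trans_le hqq; have := hp.trans hpp; positivity) (by have := hq.trans_le hqq; gcongr)
  have h2 : hB (p * q / T) < hB (p' * q / T) := hB_strictMono (by simp only [Set.mem_Ici]; positivity)
    (by simp only [Set.mem_Ici]; have := hp.trans hpp; positivity) (by gcongr)
  have h3 := hB_diff_mono (τ := T / t) (by rwa [one_le_div ht]) (a := p * q / t) (b := p * q' / t)
    (by simp only [Set.mem_Ici]; positivity) (by simp only [Set.mem_Ici]; have := hq.trans_le hqq; positivity) (by gcongr)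
  simp only at h3
  have e1 : p * q / t / (T / t) = p * q / T := by field_simp
  have e2 : p * q' / t / (T / t) = p * q' / T := by field_simp
  rw [e1, e2] at h3
  linarith

/-- the right cap -/
def cap (e : E4) (μ : ℝ) : Set E4 := {x | ‖x‖ < 1 ∧ μ < inner ℝ e x}

lemma cap_open (e : E4) (μ : ℝ) : IsOpen (cap e μ) :=
  (isOpen_lt continuous_norm continuous_const).inter (isOpen_lt (f := fun _ => μ) (g := fun x : E4 => inner ℝ e x) continuous_const (by fun_prop))

lemma cap_sub (e : E4) (μ : ℝ) : cap e μ ⊆ B1 := fun x hx => by simpa using hx.1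

lemma rfl4_ball {e : E4} (he : ‖e‖ = 1) {μ : ℝ} (hμ : 0 ≤ μ) {x : E4} (hx : x ∈ cap e μ) : rfl4 e μ x ∈ B1 := by
  have h1 := rfl4_norm he μ x
  have h2 := hx.1
  have h3 := hx.2
  have : ‖rfl4 e μ x‖ ^ 2 < 1 := by
    rw [h1]; nlinarith [norm_nonneg x, mul_nonneg hμ (sub_nonneg.2 h3.le)]
  simp only [mem_ball, dist_zero_right]
  nlinarith [norm_nonneg (rfl4 e μ x)]

lemma abs_cont {ε : ℝ} (hε : 0 < ε) : ∃ η : ENNReal, 0 < η ∧ ∀ x ∈ B1, ∀ E ⊆ B1, MeasurableSet E → volume E < η →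
    ∫ y in E, (tq x y)⁻¹ < ε := by
  let g : E4 → ENNReal := fun z => ENNReal.ofReal (Set.indicator (ball (0:E4) 3) (fun z => (‖z‖ ^ 2)⁻¹) z)
  have h1 : IntegrableOn (fun z : E4 => (‖z‖ ^ 2)⁻¹) (ball (0:E4) 3) := by
    rw [integrableOn_fun_norm_addHaar volume (f := fun r => (r ^ 2)⁻¹)]
    have : IntegrableOn (fun y : ℝ => y) (Set.Ioo 0 3) :=
      (continuous_id.integrableOn_Icc (a := 0) (b := 3)).mono_set Set.Ioo_subset_Icc_self
    refine this.congr_fun (fun r hr => ?_) measurableSet_Ioo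
    have : r ≠ 0 := hr.1.ne'
    simp; field_simp
  have h2 := (integrable_indicator_iff measurableSet_ball).2 h1
  have hg : ∫⁻ z, g z ≠ ⊤ := h2.lintegral_lt_top.ne
  obtain ⟨η, hη, h⟩ := exists_pos_setLIntegral_lt_of_measure_lt hg (ε := ENNReal.ofReal ε) (by simpa using hε)
  refine ⟨η, hη, fun x hx E hE hEm hEv => ?_⟩
  have hmp := Measure.measurePreserving_sub_left (volume : Measure E4) x
  have hemb : MeasurableEmbedding (fun y : E4 => x - y) := (MeasurableEquiv.subLeft x).measurableEmbedding
  have hpre : (fun y : E4 => x - y) ⁻¹' ((fun y : E4 => x - y) ⁻¹' E) = E := by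
    ext y; simp
  have hs := h ((fun y : E4 => x - y) ⁻¹' E) (by rwa [hmp.measure_preimage hEm.nullMeasurableSet])
  have h4 := hmp.setLIntegral_comp_preimage_emb hemb g ((fun y : E4 => x - y) ⁻¹' E)
  rw [hpre] at h4
  rw [← h4] at hs
  rw [integral_eq_lintegral_of_nonneg_ae (f := fun y => (tq x y)⁻¹) (Eventually.of_forall fun y => by have := tq_nonneg x y; simp; positivity)
    (((tq_contDiff x (n := 0)).continuous.measurable.inv).aestronglyMeasurable)]
  have h5 : ∫⁻ y in E, ENNReal.ofReal ((tq x y)⁻¹) = ∫⁻ y in E, g (x - y) := by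
    refine setLIntegral_congr_fun hEm fun y hy => ?_
    have : x - y ∈ ball (0:E4) 3 := by
      have := hE hy
      simp at hx this ⊢
      linarith [norm_sub_le x y]
    simp only [g, Set.indicator_of_mem this, tq_eq]
  rw [h5]
  exact (ENNReal.lt_ofReal_iff_toReal_lt hs.ne_top).1 hs

lemma GB_meas (x : E4) : Measurable (GB x) := by
  unfold GB hB
  fun_prop

lemma fG_int {U : E4 → ℝ} (hU : Continuous U) {x : E4} (hx : x ∈ B1) (l : ℝ) :
    IntegrableOn (fun y => l * Real.exp (U y) * GB x y) B1 := by
  have hc : ContinuousOn (fun y => l * Real.exp (U y)) CB := by fun_prop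
  obtain ⟨K, hK0, hK⟩ := bound_CB hc
  refine Integrable.mono' (Integrable.const_mul (inv_sq_integrable (ball_subset_closedBall hx)) K) ?_ ?_
  · exact (Measurable.mul (by fun_prop) (GB_meas x)).aestronglyMeasurable
  · filter_upwards [ae_ne x] with y hy
    have hyC := ball_subset_closedBall hy.1
    have h1 := GB_nonneg (ball_subset_closedBall hx) hyC
    rw [norm_mul, Real.norm_of_nonneg h1]
    exact mul_le_mul (hK y hyC) (GB_le (ball_subset_closedBall hx) hyC) h1 hK0





/-- difference of Green functions at the reflected point and at the point -/
def kd (e : E4) (μ : ℝ) (x y : E4) : ℝ := GB (rfl4 e μ x) y - GB x y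

lemma p_pos {x : E4} (hx : x ∈ B1) : 0 < 1 - ‖x‖ ^ 2 := by
  simp at hx; nlinarith [norm_nonneg x]

lemma kd_left {e : E4} (he : ‖e‖ = 1) {μ : ℝ} (hμ : 0 ≤ μ) {x y : E4} (hx : x ∈ cap e μ) (hy : y ∈ B1)
    (hyl : inner ℝ e y ≤ μ) (hne : rfl4 e μ x ≠ y) : 0 ≤ kd e μ x y := by
  have hp := p_pos (cap_sub e μ hx)
  have hq := p_pos hy
  have hx2 := hx.2
  have hn := rfl4_norm he μ x
  have hs := rfl4_sub he μ x y
  have hT : 0 < ‖rfl4 e μ x - y‖ ^ 2 := by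
    have := norm_pos_iff.2 (sub_ne_zero.2 hne); positivity
  have hle : ‖rfl4 e μ x - y‖ ^ 2 ≤ ‖x - y‖ ^ 2 := by
    rw [hs]; nlinarith
  have hpp : 1 - ‖x‖ ^ 2 ≤ 1 - ‖rfl4 e μ x‖ ^ 2 := by
    rw [hn]; nlinarith
  unfold kd GB
  rw [sub_nonneg]
  apply hB_strictMono.monotoneOn
  · simp only [Set.mem_Ici]; positivity
  · simp only [Set.mem_Ici]; have := hp.trans_le hpp; positivity
  · have := hp.trans_le hpp
    gcongr

lemma kd_refl {e : E4} (he : ‖e‖ = 1) {μ : ℝ} (hμ : 0 ≤ μ) {x y : E4} (hx : x ∈ cap e μ) (hy : y ∈ cap e μ)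
    (hne : x ≠ y) : 0 ≤ kd e μ x (rfl4 e μ y) ∧ kd e μ x (rfl4 e μ y) ≤ (tq x y)⁻¹ := by
  constructor
  · apply kd_left he hμ hx (rfl4_ball he hμ hy)
    · rw [rfl4_inner he]; have := hy.2; linarith
    · intro h
      apply hne
      rw [← rfl4_invol he μ x, h, rfl4_invol he]
  · unfold kd
    have h1 := GB_le (ball_subset_closedBall (rfl4_ball he hμ hx)) (ball_subset_closedBall (rfl4_ball he hμ hy))
    have h2 := GB_nonneg (ball_subset_closedBall (cap_sub e μ hx)) (ball_subset_closedBall (rfl4_ball he hμ hy))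
    rw [tq_eq, rfl4_sub_sub he, ← tq_eq] at h1
    linarith

lemma kd_sum {e : E4} (he : ‖e‖ = 1) {μ : ℝ} (hμ : 0 < μ) {x y : E4} (hx : x ∈ cap e μ) (hy : y ∈ cap e μ)
    (hne : x ≠ y) : 0 < kd e μ x y + kd e μ x (rfl4 e μ y) := by
  have hp := p_pos (cap_sub e μ hx)
  have hq := p_pos (cap_sub e μ hy)
  have hx2 := hx.2
  have hy2 := hy.2
  have hnx := rfl4_norm he μ x
  have hny := rfl4_norm he μ y
  have hs := rfl4_sub he μ x y
  have hs2 := rfl4_sub he μ y x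
  rw [norm_sub_rev, norm_sub_rev y x] at hs2
  have ht : 0 < ‖x - y‖ ^ 2 := by
    have := norm_pos_iff.2 (sub_ne_zero.2 hne); positivity
  have hT : ‖x - y‖ ^ 2 ≤ ‖rfl4 e μ x - y‖ ^ 2 := by
    rw [hs]; nlinarith [mul_pos (sub_pos.2 hx2) (sub_pos.2 hy2)]
  have hTT : ‖x - rfl4 e μ y‖ ^ 2 = ‖rfl4 e μ x - y‖ ^ 2 := by rw [hs2, hs]; ring
  have := four_pt (p := 1 - ‖x‖ ^ 2) (p' := 1 - ‖rfl4 e μ x‖ ^ 2) (q := 1 - ‖y‖ ^ 2) (q' := 1 - ‖rfl4 e μ y‖ ^ 2)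
    hp (by rw [hnx]; nlinarith [mul_pos hμ (sub_pos.2 hx2)]) hq (by rw [hny]; nlinarith [mul_pos hμ (sub_pos.2 hy2)]) ht hT
  unfold kd GB
  rw [hTT, rfl4_sub_sub he]
  linarith

lemma kd_int {U : E4 → ℝ} (hU : Continuous U) {l : ℝ} {e : E4} (he : ‖e‖ = 1) {μ : ℝ} (hμ : 0 ≤ μ)
    {x : E4} (hx : x ∈ cap e μ) : IntegrableOn (fun y => l * Real.exp (U y) * kd e μ x y) B1 := by
  have h1 := (fG_int hU (rfl4_ball he hμ hx) l).sub (fG_int hU (cap_sub e μ hx) l)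
  refine h1.congr_fun (fun y _ => ?_) measurableSet_ball
  simp only [kd, Pi.sub_apply]; ring

lemma mp_core {U : E4 → ℝ} (hU : Continuous U) {l : ℝ} (hl : 0 < l)
    (hrep : ∀ x ∈ B1, ∫ y in B1, l * Real.exp (U y) * GB x y = 16 * Real.pi ^ 2 * U x)
    {e : E4} (he : ‖e‖ = 1) {μ : ℝ} (hμ : 0 ≤ μ) {x : E4} (hx : x ∈ cap e μ) :
    IntegrableOn (fun y => l * Real.exp (U y) * kd e μ x y +
        l * Real.exp (U (rfl4 e μ y)) * kd e μ x (rfl4 e μ y)) (cap e μ) ∧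
    ∫ y in cap e μ, (l * Real.exp (U y) * kd e μ x y +
        l * Real.exp (U (rfl4 e μ y)) * kd e μ x (rfl4 e μ y)) ≤
      16 * Real.pi ^ 2 * (U (rfl4 e μ x) - U x) := by
  set F : E4 → ℝ := fun y => l * Real.exp (U y) * kd e μ x y with hF
  have hFi : IntegrableOn F B1 := kd_int hU he hμ hx
  have hAm : MeasurableSet (cap e μ) := (cap_open e μ).measurableSet
  have hpre : rfl4 e μ ⁻¹' (rfl4 e μ ⁻¹' cap e μ) = cap e μ := by
    ext y; simp [rfl4_invol he]
  have hAm2 : MeasurableSet (rfl4 e μ ⁻¹' cap e μ) := (rfl4_cont e μ).measurable hAm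
  have hsub : rfl4 e μ ⁻¹' cap e μ ⊆ B1 \ cap e μ := by
    intro y hy
    have h1 := rfl4_ball he hμ hy
    rw [rfl4_invol he] at h1
    refine ⟨h1, fun h2 => ?_⟩
    have h3 := hy.2
    rw [rfl4_inner he] at h3
    have := h2.2
    linarith
  have hFA : IntegrableOn F (cap e μ) := hFi.mono_set (cap_sub e μ)
  have hFR : IntegrableOn F (B1 \ cap e μ) := hFi.mono_set Set.sdiff_subset
  have hFS : IntegrableOn F (rfl4 e μ ⁻¹' cap e μ) := hFR.mono_set hsub
  have hFs : IntegrableOn (fun y => F (rfl4 e μ y)) (cap e μ) := by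
    have := ((rfl4_mp he μ).integrableOn_comp_preimage (rfl4_emb he μ) (f := F) (s := rfl4 e μ ⁻¹' cap e μ)).2 hFS
    rwa [hpre] at this
  refine ⟨hFA.add hFs, ?_⟩
  have e1 := (rfl4_mp he μ).setIntegral_preimage_emb (rfl4_emb he μ) F (rfl4 e μ ⁻¹' cap e μ)
  rw [hpre] at e1
  have e2 : ∫ y in B1, F y = 16 * Real.pi ^ 2 * (U (rfl4 e μ x) - U x) := by
    rw [mul_sub, ← hrep _ (rfl4_ball he hμ hx), ← hrep _ (cap_sub e μ hx),
      ← integral_sub (fG_int hU (rfl4_ball he hμ hx) l) (fG_int hU (cap_sub e μ hx) l)]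
    refine setIntegral_congr_fun measurableSet_ball fun y _ => ?_
    simp only [hF, kd]; ring
  have e3 : ∫ y in B1, F y = (∫ y in cap e μ, F y) + ∫ y in B1 \ cap e μ, F y := by
    rw [← setIntegral_union Set.disjoint_sdiff_right (measurableSet_ball.diff hAm) hFA hFR, Set.union_sdiff_cancel (cap_sub e μ)]
  have e4 : ∫ y in rfl4 e μ ⁻¹' cap e μ, F y ≤ ∫ y in B1 \ cap e μ, F y := by
    apply setIntegral_mono_set hFR _ (LE.le.eventuallyLE hsub)
    have h2 : ∀ᵐ y ∂(volume.restrict (B1 \ cap e μ)), y ≠ rfl4 e μ x := by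
      apply ae_restrict_of_ae
      have : volume ({rfl4 e μ x} : Set E4) = 0 := measure_singleton _
      filter_upwards [measure_eq_zero_iff_ae_notMem.1 this] with y hy using by simpa using hy
    filter_upwards [ae_restrict_mem (measurableSet_ball.diff hAm), h2] with y hy hne
    have : inner ℝ e y ≤ μ := by
      by_contra hc
      exact hy.2 ⟨by simpa using hy.1, not_le.1 hc⟩
    exact mul_nonneg (by positivity) (kd_left he hμ hx hy.1 this hne.symm)
  rw [integral_add hFA hFs, e1, ← e2, e3]
  linarith

lemma ae_ne_cap (e : E4) (μ : ℝ) (x : E4) : ∀ᵐ y ∂(volume.restrict (cap e μ)), y ∈ cap e μ ∧ x ≠ y := by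
  have h2 : ∀ᵐ y ∂(volume.restrict (cap e μ)), y ≠ x := by
    apply ae_restrict_of_ae
    have : volume ({x} : Set E4) = 0 := measure_singleton _
    filter_upwards [measure_eq_zero_iff_ae_notMem.1 this] with y hy using by simpa using hy
  filter_upwards [ae_restrict_mem (cap_open e μ).measurableSet, h2] with y a b using ⟨a, b.symm⟩

lemma mp_strict {U : E4 → ℝ} (hU : Continuous U) {l : ℝ} (hl : 0 < l)
    (hrep : ∀ x ∈ B1, ∫ y in B1, l * Real.exp (U y) * GB x y = 16 * Real.pi ^ 2 * U x)
    {e : E4} (he : ‖e‖ = 1) {μ : ℝ} (hμ : 0 < μ) (hw : ∀ y ∈ cap e μ, U y ≤ U (rfl4 e μ y))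
    {x : E4} (hx : x ∈ cap e μ) : U x < U (rfl4 e μ x) := by
  obtain ⟨hi, hle⟩ := mp_core hU hl hrep he hμ.le hx
  have hae : ∀ᵐ y ∂(volume.restrict (cap e μ)), 0 < l * Real.exp (U y) * kd e μ x y +
        l * Real.exp (U (rfl4 e μ y)) * kd e μ x (rfl4 e μ y) := by
    filter_upwards [ae_ne_cap e μ x] with y hy
    have h1 := kd_sum he hμ hx hy.1 hy.2
    have h2 := (kd_refl he hμ.le hx hy.1 hy.2).1
    have h3 : l * Real.exp (U y) ≤ l * Real.exp (U (rfl4 e μ y)) := by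
      have := hw y hy.1; gcongr
    have h4 : 0 < l * Real.exp (U y) := by positivity
    nlinarith [mul_nonneg (sub_nonneg.2 h3) h2, mul_pos h4 h1]
  have hpos : 0 < ∫ y in cap e μ, (l * Real.exp (U y) * kd e μ x y +
        l * Real.exp (U (rfl4 e μ y)) * kd e μ x (rfl4 e μ y)) := by
    rw [integral_pos_iff_support_of_nonneg_ae (hae.mono fun y hy => hy.le) hi]
    have hv : 0 < volume (cap e μ) := (cap_open e μ).measure_pos _ ⟨x, hx⟩
    have : (volume.restrict (cap e μ)) (Function.support fun y => l * Real.exp (U y) * kd e μ x y +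
        l * Real.exp (U (rfl4 e μ y)) * kd e μ x (rfl4 e μ y)) = (volume.restrict (cap e μ)) Set.univ := by
      apply measure_congr
      filter_upwards [hae] with y hy
      rw [eq_iff_iff]
      exact ⟨fun _ => trivial, fun _ => ne_of_gt hy⟩
    rw [this]
    simpa using hv
  have := Real.pi_pos
  have h5 : 0 < 16 * Real.pi ^ 2 := by positivity
  by_contra hc
  nlinarith

lemma mp_narrow {U : E4 → ℝ} (hU : Continuous U) {l : ℝ} (hl : 0 < l)
    (hrep : ∀ x ∈ B1, ∫ y in B1, l * Real.exp (U y) * GB x y = 16 * Real.pi ^ 2 * U x) :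
    ∃ η : ENNReal, 0 < η ∧ ∀ e : E4, ‖e‖ = 1 → ∀ μ, 0 < μ →
      volume {y ∈ cap e μ | U (rfl4 e μ y) < U y} < η → ∀ x ∈ cap e μ, U x ≤ U (rfl4 e μ x) := by
  obtain ⟨M, hM0, hM⟩ := bound_CB hU.continuousOn
  have hpi := Real.pi_pos
  obtain ⟨η, hη, h⟩ := abs_cont (ε := 8 * Real.pi ^ 2 / (l * Real.exp M)) (by positivity)
  refine ⟨η, hη, fun e he μ hμ hv => ?_⟩
  set E : Set E4 := {y ∈ cap e μ | U (rfl4 e μ y) < U y} with hE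
  have hEo : IsOpen E := (cap_open e μ).inter (isOpen_lt (hU.comp (rfl4_cont e μ)) hU)
  have hEc : E ⊆ cap e μ := fun y hy => hy.1
  -- the key halving step
  have key : ∀ W : ℝ, 0 ≤ W → (∀ y ∈ cap e μ, U y - U (rfl4 e μ y) ≤ W) → ∀ x ∈ cap e μ, U x - U (rfl4 e μ x) ≤ W / 2 := by
    intro W hW0 hW x hx
    obtain ⟨hi, hle⟩ := mp_core hU hl hrep he hμ.le hx
    have hlow : ∫ y in cap e μ, Set.indicator E (fun y => -(l * Real.exp M * W) * (tq x y)⁻¹) y ≤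
        ∫ y in cap e μ, (l * Real.exp (U y) * kd e μ x y +
        l * Real.exp (U (rfl4 e μ y)) * kd e μ x (rfl4 e μ y)) := by
      have hti : IntegrableOn (fun y => (tq x y)⁻¹) (cap e μ) :=
        (inv_sq_integrable (ball_subset_closedBall (cap_sub e μ hx))).mono_set (cap_sub e μ)
      refine integral_mono_ae ((hti.const_mul _).indicator hEo.measurableSet) hi ?_
      filter_upwards [ae_ne_cap e μ x] with y hy
      have h1 := kd_sum he hμ hx hy.1 hy.2
      have h2 := kd_refl he hμ.le hx hy.1 hy.2
      have h4 : 0 < l * Real.exp (U y) := by positivity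
      have h5 := mul_pos h4 h1
      by_cases hyE : y ∈ E
      · rw [Set.indicator_of_mem hyE]
        have h6 : U (rfl4 e μ y) - U y + 1 ≤ Real.exp (U (rfl4 e μ y) - U y) := Real.add_one_le_exp _
        have h7 : Real.exp (U (rfl4 e μ y)) = Real.exp (U y) * Real.exp (U (rfl4 e μ y) - U y) := by
          rw [← Real.exp_add]; congr 1; ring
        have h8 : Real.exp (U y) - Real.exp (U (rfl4 e μ y)) ≤ Real.exp M * W := by
          have hyM : U y ≤ M := (le_abs_self _).trans (hM y (ball_subset_closedBall (cap_sub e μ hy.1)))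
          calc _ ≤ Real.exp (U y) * W := by
                rw [h7]; have := hW y hy.1; have := Real.exp_pos (U y); nlinarith
            _ ≤ _ := by gcongr
        have h9 : l * (Real.exp (U y) - Real.exp (U (rfl4 e μ y))) * kd e μ x (rfl4 e μ y) ≤ l * (Real.exp M * W) * (tq x y)⁻¹ := by
          refine (mul_le_mul_of_nonneg_right (mul_le_mul_of_nonneg_left h8 hl.le) h2.1).trans ?_
          exact mul_le_mul_of_nonneg_left h2.2 (by positivity)
        nlinarith
      · rw [Set.indicator_of_notMem hyE]
        have h3 : l * Real.exp (U y) ≤ l * Real.exp (U (rfl4 e μ y)) := by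
          have : U y ≤ U (rfl4 e μ y) := by
            by_contra hc; exact hyE ⟨hy.1, not_le.1 hc⟩
          gcongr
        nlinarith [mul_nonneg (sub_nonneg.2 h3) h2.1]
    rw [setIntegral_indicator hEo.measurableSet, Set.inter_eq_right.2 hEc, integral_const_mul] at hlow
    have hb := h x (cap_sub e μ hx) E (hEc.trans (cap_sub e μ)) hEo.measurableSet hv
    rw [lt_div_iff₀ (by positivity)] at hb
    have h10 : (l * Real.exp M * W) * ∫ y in E, (tq x y)⁻¹ ≤ 8 * Real.pi ^ 2 * W := by nlinarith
    have h11 : 16 * Real.pi ^ 2 * (U x - U (rfl4 e μ x)) ≤ 16 * Real.pi ^ 2 * (W / 2) := by nlinarith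
    exact le_of_mul_le_mul_left h11 (by positivity)
  have iter : ∀ n : ℕ, ∀ x ∈ cap e μ, U x - U (rfl4 e μ x) ≤ 2 * M / 2 ^ n := by
    intro n
    induction n with
    | zero =>
      intro x hx
      have h1 := hM x (ball_subset_closedBall (cap_sub e μ hx))
      have h2 := hM _ (ball_subset_closedBall (rfl4_ball he hμ.le hx))
      rw [Real.norm_eq_abs, abs_le] at h1 h2
      simp; linarith [h1.2, h2.1]
    | succ n ih =>
      intro x hx
      have := key _ (by positivity) ih x hx
      rw [pow_succ]; convert this using 1; field_simp
  intro x hx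
  have hlim : Tendsto (fun n : ℕ => 2 * M / 2 ^ n) atTop (nhds 0) :=
    tendsto_const_nhds.div_atTop (tendsto_pow_atTop_atTop_of_one_lt one_lt_two)
  have := ge_of_tendsto' hlim fun n => iter n x hx
  linarith





lemma hyperplane_null {e : E4} (he : ‖e‖ = 1) (μ : ℝ) : ∀ᵐ y : E4, inner ℝ e y ≠ μ := by
  have h1 : volume ((LinearMap.ker (innerSL ℝ e).toLinearMap : Submodule ℝ E4) : Set E4) = 0 := by
    apply Measure.addHaar_submodule
    intro h
    have : e ∈ LinearMap.ker (innerSL ℝ e).toLinearMap := by rw [h]; trivial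
    simp at this
    rw [this] at he; simp at he
  have h2 : volume ((fun y : E4 => y + (-(μ • e))) ⁻¹' ((LinearMap.ker (innerSL ℝ e).toLinearMap : Submodule ℝ E4) : Set E4)) = 0 := by
    rw [measure_preimage_add_right, h1]
  filter_upwards [measure_eq_zero_iff_ae_notMem.1 h2] with y hy hc
  apply hy
  simp [inner_add_right, inner_smul_right, hc, he]

lemma mp_closed {U : E4 → ℝ} (hU : Continuous U) (e : E4) :
    IsClosed {μ : ℝ | ∀ x ∈ cap e μ, U x ≤ U (rfl4 e μ x)} := by
  have : {μ : ℝ | ∀ x ∈ cap e μ, U x ≤ U (rfl4 e μ x)} =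
      ⋂ x ∈ B1, ({μ : ℝ | inner ℝ e x ≤ μ} ∪ {μ : ℝ | U x ≤ U (rfl4 e μ x)}) := by
    ext μ
    simp only [Set.mem_ofPred_eq, Set.mem_iInter, Set.mem_union, cap, mem_ball, dist_zero_right]
    constructor
    · intro h x hx
      by_cases h2 : inner ℝ e x ≤ μ
      · exact Or.inl h2
      · exact Or.inr (h x ⟨hx, not_le.1 h2⟩)
    · rintro h x ⟨hx, h2⟩
      rcases h x hx with h3 | h3
      · linarith
      · exact h3
  rw [this]
  refine isClosed_biInter fun x _ => IsClosed.union (isClosed_le continuous_const continuous_id) (isClosed_le continuous_const ?_)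
  apply hU.comp
  unfold rfl4
  fun_prop

lemma mp_open {U : E4 → ℝ} (hU : Continuous U) {l : ℝ} (hl : 0 < l)
    (hrep : ∀ x ∈ B1, ∫ y in B1, l * Real.exp (U y) * GB x y = 16 * Real.pi ^ 2 * U x)
    {e : E4} (he : ‖e‖ = 1) {μ : ℝ} (hμ : 0 < μ) (hw : ∀ y ∈ cap e μ, U y ≤ U (rfl4 e μ y)) :
    ∀ᶠ ν in nhds μ, ∀ y ∈ cap e ν, U y ≤ U (rfl4 e ν y) := by
  obtain ⟨η, hη, h⟩ := mp_narrow hU hl hrep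
  have hlim : Tendsto (fun ν => volume {y ∈ cap e ν | U (rfl4 e ν y) < U y}) (nhds μ) (nhds (volume (∅ : Set E4))) := by
    have hcr : ∀ y : E4, Continuous fun ν => U (rfl4 e ν y) := by
      intro y; apply hU.comp; unfold rfl4; fun_prop
    refine tendsto_measure_of_ae_tendsto_indicator (nhds μ) MeasurableSet.empty (fun ν => ?_) (B := B1) measurableSet_ball
      measure_ball_lt_top.ne (Eventually.of_forall fun ν y hy => cap_sub e ν hy.1) ?_
    · exact ((cap_open e ν).inter (isOpen_lt (hU.comp (rfl4_cont e ν)) hU)).measurableSet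
    · filter_upwards [hyperplane_null he μ] with y hy
      rcases lt_or_gt_of_ne hy with h1 | h1
      · filter_upwards [lt_mem_nhds h1] with ν hν
        simp only [Set.mem_empty_iff_false, iff_false]
        intro h2
        exact absurd h2.1.2 (not_lt.2 hν.le)
      · by_cases hyB : ‖y‖ < 1
        · have h2 := mp_strict hU hl hrep he hμ hw (x := y) ⟨hyB, h1⟩
          filter_upwards [(hcr y).continuousAt.eventually (lt_mem_nhds h2)] with ν hν
          simp only [Set.mem_empty_iff_false, iff_false]
          intro h3
          exact absurd h3.2 (not_lt.2 hν.le)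
        · refine Eventually.of_forall fun ν => ?_
          simp only [Set.mem_empty_iff_false, iff_false]
          intro h3
          exact hyB h3.1.1
  rw [measure_empty] at hlim
  filter_upwards [hlim.eventually (gt_mem_nhds hη), lt_mem_nhds hμ] with ν h1 h2
  exact h e he ν h2 h1

lemma mp_all {U : E4 → ℝ} (hU : Continuous U) {l : ℝ} (hl : 0 < l)
    (hrep : ∀ x ∈ B1, ∫ y in B1, l * Real.exp (U y) * GB x y = 16 * Real.pi ^ 2 * U x)
    {e : E4} (he : ‖e‖ = 1) {μ : ℝ} (hμ : 0 ≤ μ) : ∀ y ∈ cap e μ, U y ≤ U (rfl4 e μ y) := by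
  set S : Set ℝ := {μ : ℝ | ∀ x ∈ cap e μ, U x ≤ U (rfl4 e μ x)} with hS
  have hcl : IsClosed S := mp_closed hU e
  have hsub : Set.Ioi (0:ℝ) ⊆ S := by
    have hpre : IsPreconnected (Set.Ioi (0:ℝ)) := isPreconnected_Ioi
    by_contra hcon
    obtain ⟨ν, hν0, hν⟩ := Set.not_subset.1 hcon
    have hop : IsOpen (S ∩ Set.Ioi 0) := by
      rw [isOpen_iff_mem_nhds]
      rintro μ ⟨h1, h2⟩
      exact Filter.inter_mem (mp_open hU hl hrep he h2 h1) (Ioi_mem_nhds h2)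
    have h1 : (1:ℝ) ∈ S := by
      intro x hx
      have h2 := real_inner_le_norm e x
      have h3 := hx.1
      have h4 := hx.2
      rw [he] at h2
      linarith
    obtain ⟨z, hz0, hz1, hz2⟩ := hpre (S ∩ Set.Ioi 0) Sᶜ hop hcl.isOpen_compl
      (fun z hz => by
        by_cases h : z ∈ S
        · exact Or.inl ⟨h, hz⟩
        · exact Or.inr h) ⟨1, by simp, h1, by simp⟩ ⟨ν, hν0, hν⟩
    exact hz2 hz1.1
  have : Set.Ici (0:ℝ) ⊆ S := by
    rw [← closure_Ioi]
    exact hcl.closure_subset_iff.2 hsub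
  exact this hμ

/-- Radial symmetry and monotonicity. -/
theorem radial_mono {U : E4 → ℝ} (hU : Continuous U) {l : ℝ} (hl : 0 < l)
    (hrep : ∀ x ∈ B1, ∫ y in B1, l * Real.exp (U y) * GB x y = 16 * Real.pi ^ 2 * U x)
    {x y : E4} (hy : y ∈ B1) (hxy : ‖x‖ ≤ ‖y‖) : U y ≤ U x := by
  rcases eq_or_ne x y with rfl | hne
  · exact le_rfl
  have hd : 0 < ‖y - x‖ := norm_pos_iff.2 (sub_ne_zero.2 hne.symm)
  set e : E4 := ‖y - x‖⁻¹ • (y - x) with hE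
  have he : ‖e‖ = 1 := by rw [hE, norm_smul, norm_inv, norm_norm]; field_simp
  set μ : ℝ := (‖y‖ ^ 2 - ‖x‖ ^ 2) / (2 * ‖y - x‖) with hM
  have hμ : 0 ≤ μ := by
    apply div_nonneg _ (by positivity)
    nlinarith [norm_nonneg x]
  have hin : inner ℝ e y - μ = ‖y - x‖ / 2 := by
    have h1 := norm_sub_sq_real y x
    rw [hE, hM, inner_smul_left, inner_sub_left, real_inner_self_eq_norm_sq, real_inner_comm]
    simp
    field_simp
    linarith
  have hr : rfl4 e μ y = x := by
    unfold rfl4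
    rw [hin, hE, smul_smul]
    have : 2 * (‖y - x‖ / 2) * ‖y - x‖⁻¹ = 1 := by field_simp
    rw [this]; simp
  have := mp_all hU hl hrep he hμ y ⟨by simpa using hy, by linarith⟩
  rwa [hr] at this





/-- the first coordinate vector -/
def e0 : E4 := EuclideanSpace.single 0 1

lemma e0_norm : ‖e0‖ = 1 := by simp [e0]

lemma smul_e0_norm (r : ℝ) : ‖r • e0‖ = |r| := by rw [norm_smul, e0_norm, mul_one, Real.norm_eq_abs]

lemma ray_contDiffAt {w : E4 → ℝ} {n : WithTop ℕ∞} (hw : ContDiffOn ℝ n w CB) {r : ℝ} (hr : |r| < 1) :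
    ContDiffAt ℝ n (fun r : ℝ => w (r • e0)) r := by
  have h1 : ContDiffAt ℝ n w (r • e0) := hw.contDiffAt (CB_nhds (by simpa [smul_e0_norm] using hr))
  exact h1.comp r (contDiffAt_id.smul contDiffAt_const)

lemma rad_lap {w : E4 → ℝ} (hw : ContDiffOn ℝ 2 w CB) (hrad : ∀ x ∈ B1, ∀ y ∈ B1, ‖x‖ = ‖y‖ → w x = w y)
    {y : E4} (hy : y ∈ B1) (hy0 : y ≠ 0) :
    lap w y = deriv (deriv fun r : ℝ => w (r • e0)) ‖y‖ + 3 * deriv (fun r : ℝ => w (r • e0)) ‖y‖ / ‖y‖ := by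
  set W : ℝ → ℝ := fun r : ℝ => w (r • e0) with hW
  have hr0 : 0 < ‖y‖ := norm_pos_iff.2 hy0
  have hr1 : ‖y‖ < 1 := by simpa using hy
  have hq : ∀ z : E4, quad 1 0 0 z = ‖z‖ ^ 2 := fun z => by simp [quad]
  have hWc : ContDiffAt ℝ 2 W ‖y‖ := ray_contDiffAt hw (by rwa [abs_norm])
  have hsq : Real.sqrt (quad 1 0 0 y) = ‖y‖ := by rw [hq, Real.sqrt_sq hr0.le]
  have hqne : quad 1 0 0 y ≠ 0 := by rw [hq]; positivity
  have hcomp : lap w y = lap (fun z => (fun t => W (Real.sqrt t)) (quad 1 0 0 z)) y := by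
    apply lap_congr
    filter_upwards [isOpen_ball.mem_nhds hy] with z hz
    simp only [hW, hq, Real.sqrt_sq (norm_nonneg z)]
    have hz1 : ‖z‖ < 1 := by simpa using hz
    apply hrad z hz
    · simpa [smul_e0_norm] using hz1
    · rw [smul_e0_norm, abs_norm]
  have hev : ∀ᶠ s in nhds ‖y‖, HasDerivAt W (deriv W s) s := by
    filter_upwards [(hWc.of_le (m := 1) (by norm_num)).eventually (by simp)] with s hs using
      (hs.differentiableAt one_ne_zero).hasDerivAt
  have hd2 : HasDerivAt (deriv W) (deriv (deriv W) ‖y‖) ‖y‖ := by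
    have : ContDiffAt ℝ 1 (deriv W) ‖y‖ := hWc.derivWithin (by norm_num)
    exact (this.differentiableAt one_ne_zero).hasDerivAt
  have hsc : Tendsto Real.sqrt (nhds (quad 1 0 0 y)) (nhds ‖y‖) := by
    rw [← hsq]; exact Real.continuous_sqrt.continuousAt
  have hsd : HasDerivAt Real.sqrt (1 / (2 * ‖y‖)) (quad 1 0 0 y) := by
    rw [← hsq]; exact Real.hasDerivAt_sqrt hqne
  have h1 : ∀ᶠ t in nhds (quad 1 0 0 y), HasDerivAt (fun t => W (Real.sqrt t)) ((fun t => deriv W (Real.sqrt t) * (1 / (2 * Real.sqrt t))) t) t := by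
    filter_upwards [hsc.eventually hev, eventually_ne_nhds hqne] with t ht ht0
    exact HasDerivAt.comp t ht (Real.hasDerivAt_sqrt ht0)
  have h2 : HasDerivAt (fun t => deriv W (Real.sqrt t) * (1 / (2 * Real.sqrt t)))
      ((deriv (deriv W) ‖y‖ * (1 / (2 * ‖y‖))) * (1 / (2 * ‖y‖)) + deriv W ‖y‖ * (-(2 * (1 / (2 * ‖y‖))) / (2 * ‖y‖) ^ 2)) (quad 1 0 0 y) := by
    have a1 : HasDerivAt (fun t => deriv W (Real.sqrt t)) (deriv (deriv W) ‖y‖ * (1 / (2 * ‖y‖))) (quad 1 0 0 y) := by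
      refine HasDerivAt.comp (h₂ := deriv W) (h := Real.sqrt) _ ?_ hsd
      rw [hsq]; exact hd2
    have a2 : HasDerivAt (fun t => (1:ℝ) / (2 * Real.sqrt t)) (-(2 * (1 / (2 * ‖y‖))) / (2 * ‖y‖) ^ 2) (quad 1 0 0 y) := by
      have := (hsd.const_mul 2).fun_inv (by rw [hsq]; positivity)
      rw [hsq] at this
      simpa only [one_div] using this
    have := a1.mul a2
    rw [hsq] at this
    exact this
  rw [hcomp, lap_comp_quad _ _ _ 1 0 0 y h1 h2, hsq, hq]
  simp only [norm_zero]
  field_simp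
  ring

lemma ball_radial {g : E4 → ℝ} (hrad : ∀ x ∈ B1, ∀ y ∈ B1, ‖x‖ = ‖y‖ → g x = g y) :
    ∫ y in B1, g y = 2 * Real.pi ^ 2 * ∫ r in (0:ℝ)..1, r ^ 3 * g (r • e0) := by
  have h := radial_integral (Set.indicator (Set.Iio 1) fun r => g (r • e0))
  rw [← integral_indicator measurableSet_ball]
  have e1 : ∀ x : E4, Set.indicator B1 g x = Set.indicator (Set.Iio 1) (fun r : ℝ => g (r • e0)) ‖x‖ := by
    intro x
    by_cases hx : ‖x‖ < 1
    · rw [Set.indicator_of_mem (by simpa using hx), Set.indicator_of_mem (by simpa using hx)]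
      exact hrad _ (by simpa using hx) _ (by simpa [smul_e0_norm] using hx) (by rw [smul_e0_norm, abs_norm])
    · rw [Set.indicator_of_notMem (by simpa using hx), Set.indicator_of_notMem (by simpa using hx)]
  simp only [e1]
  rw [h, intervalIntegral.integral_of_le zero_le_one, integral_Ioc_eq_integral_Ioo]
  congr 1
  have e2 : ∀ r : ℝ, r ^ 3 * Set.indicator (Set.Iio 1) (fun r => g (r • e0)) r = Set.indicator (Set.Iio 1) (fun r => r ^ 3 * g (r • e0)) r := by
    intro r
    by_cases hr : r ∈ Set.Iio (1:ℝ)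
    · rw [Set.indicator_of_mem hr, Set.indicator_of_mem hr]
    · rw [Set.indicator_of_notMem hr, Set.indicator_of_notMem hr, mul_zero]
  simp only [e2]
  rw [setIntegral_indicator measurableSet_Iio, Set.Ioi_inter_Iio]

/-- radial derivative, defined up to the boundary -/
def rder (w : E4 → ℝ) (r : ℝ) : ℝ := fderivWithin ℝ w CB (r • e0) e0

lemma ray_mem {r : ℝ} (hr : r ∈ Set.Icc (0:ℝ) 1) : r • e0 ∈ CB := by
  simp [smul_e0_norm, abs_of_nonneg hr.1, hr.2]

lemma ray_mapsTo : Set.MapsTo (fun r : ℝ => r • e0) (Set.Icc (0:ℝ) 1) CB := fun _ hr => ray_mem hr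

lemma ray_mem' {r : ℝ} (hr : r ∈ Set.Ioo (0:ℝ) 1) : r • e0 ∈ B1 := by
  simp [smul_e0_norm, abs_of_pos hr.1, hr.2]

lemma ray_cont {w : E4 → ℝ} (hw : ContinuousOn w CB) : ContinuousOn (fun r : ℝ => w (r • e0)) (Set.Icc (0:ℝ) 1) :=
  hw.comp (by fun_prop) ray_mapsTo

lemma rder_cont {w : E4 → ℝ} (hw : ContDiffOn ℝ 2 w CB) : ContinuousOn (rder w) (Set.Icc (0:ℝ) 1) := by
  have : ContinuousOn (fun x => fderivWithin ℝ w CB x e0) CB :=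
    (hw.continuousOn_fderivWithin uniqueDiffOn_CB (by norm_num)).clm_apply continuousOn_const
  exact ray_cont this

lemma rder_deriv {w : E4 → ℝ} (hw : ContDiffOn ℝ 2 w CB) {r : ℝ} (hr : r ∈ Set.Ioo (0:ℝ) 1) :
    HasDerivAt (fun r : ℝ => w (r • e0)) (rder w r) r := by
  have hn := CB_nhds (ray_mem' hr)
  have h1 : DifferentiableAt ℝ w (r • e0) := (hw.differentiableOn (by norm_num)).differentiableAt hn
  unfold rder
  rw [fderivWithin_of_mem_nhds hn]
  have h2 : HasDerivAt (fun r : ℝ => r • e0) e0 r := by simpa using (hasDerivAt_id r).smul_const e0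
  exact h1.hasFDerivAt.comp_hasDerivAt r h2

lemma rder_deriv2 {w : E4 → ℝ} (hw : ContDiffOn ℝ 2 w CB) (hrad : ∀ x ∈ B1, ∀ y ∈ B1, ‖x‖ = ‖y‖ → w x = w y)
    {r : ℝ} (hr : r ∈ Set.Ioo (0:ℝ) 1) :
    HasDerivAt (rder w) (lap w (r • e0) - 3 * rder w r / r) r := by
  have hne : r • e0 ≠ 0 := by
    rw [← norm_pos_iff, smul_e0_norm, abs_of_pos hr.1]; exact hr.1
  have h1 := rad_lap hw hrad (ray_mem' hr) hne
  have hc : ContDiffAt ℝ 2 (fun r : ℝ => w (r • e0)) r := ray_contDiffAt hw (by rw [abs_of_pos hr.1]; exact hr.2)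
  have h2 : ContDiffAt ℝ 1 (deriv (fun r : ℝ => w (r • e0))) r := hc.derivWithin (by norm_num)
  have h3 := (h2.differentiableAt one_ne_zero).hasDerivAt
  rw [smul_e0_norm, abs_of_pos hr.1, (rder_deriv hw hr).deriv] at h1
  have h4 : lap w (r • e0) - 3 * rder w r / r = deriv (deriv (fun r : ℝ => w (r • e0))) r := by rw [h1]; ring
  rw [h4]
  refine h3.congr_of_eventuallyEq ?_
  filter_upwards [isOpen_Ioo.mem_nhds hr] with s hs
  rw [(rder_deriv hw hs).deriv]

theorem pohozaev {u : E4 → ℝ} (hu : ContDiffOn ℝ 4 u CB)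
    (h0 : ∀ x, ‖x‖ = 1 → u x = 0) (h1 : ∀ x, ‖x‖ = 1 → fderivWithin ℝ u CB x = 0) {l : ℝ}
    (hpde : ∀ x ∈ B1, lap (lap u) x = l * Real.exp (u x))
    (hrad : ∀ x ∈ B1, ∀ y ∈ B1, ‖x‖ = ‖y‖ → u x = u y) :
    ((∫ y in B1, l * Real.exp (u y)) - ∫ y in B1, ‖y‖ ^ 2 * (l * Real.exp (u y))) ^ 2 + 32 * Real.pi ^ 4 * l =
      64 * Real.pi ^ 2 * ∫ y in B1, l * Real.exp (u y) := by
  have hu2 : ContDiffOn ℝ 2 u CB := hu.of_le (by norm_num)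
  have hv : ContDiffOn ℝ 2 (lapW u) CB := lapW_contDiffOn (m := 3) hu (by norm_num) (by norm_num)
  have hvrad : ∀ x ∈ B1, ∀ y ∈ B1, ‖x‖ = ‖y‖ → lapW u x = lapW u y := by
    intro x hx y hy hxy
    rcases eq_or_ne x 0 with rfl | hx0
    · rw [norm_zero] at hxy
      rw [norm_eq_zero.1 hxy.symm]
    · have hy0 : y ≠ 0 := by rw [← norm_pos_iff, ← hxy]; exact norm_pos_iff.2 hx0
      rw [lapW_eq u hx, lapW_eq u hy, rad_lap hu2 hrad hx hx0, rad_lap hu2 hrad hy hy0, hxy]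
  set F : ℝ → ℝ := fun r => l * Real.exp (u (r • e0)) with hF
  set U1 := rder u with hU1
  set V : ℝ → ℝ := fun r => lapW u (r • e0) with hV
  set V1 := rder (lapW u) with hV1
  have dU : ∀ r ∈ Set.Ioo (0:ℝ) 1, HasDerivAt (fun r : ℝ => u (r • e0)) (U1 r) r := fun r hr => rder_deriv hu2 hr
  have dU1 : ∀ r ∈ Set.Ioo (0:ℝ) 1, HasDerivAt U1 (V r - 3 * U1 r / r) r := fun r hr => by
    have := rder_deriv2 hu2 hrad hr
    rwa [← lapW_eq u (ray_mem' hr)] at this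
  have dV : ∀ r ∈ Set.Ioo (0:ℝ) 1, HasDerivAt V (V1 r) r := fun r hr => rder_deriv hv hr
  have dV1 : ∀ r ∈ Set.Ioo (0:ℝ) 1, HasDerivAt V1 (F r - 3 * V1 r / r) r := fun r hr => by
    have := rder_deriv2 hv hvrad hr
    rwa [lap_lapW_eq u (ray_mem' hr), hpde _ (ray_mem' hr)] at this
  have dF : ∀ r ∈ Set.Ioo (0:ℝ) 1, HasDerivAt F (F r * U1 r) r := fun r hr =>
    (((dU r hr).exp).const_mul l).congr_deriv (by simp only [hF]; ring)
  have cU : ContinuousOn (fun r : ℝ => u (r • e0)) (Set.Icc 0 1) := ray_cont hu.continuousOn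
  have cU1 : ContinuousOn U1 (Set.Icc 0 1) := rder_cont hu2
  have cV : ContinuousOn V (Set.Icc 0 1) := ray_cont hv.continuousOn
  have cV1 : ContinuousOn V1 (Set.Icc 0 1) := rder_cont hv
  have cF : ContinuousOn F (Set.Icc 0 1) := (cU.rexp).const_smul l
  have hnorm1 : ‖(1:ℝ) • e0‖ = 1 := by rw [smul_e0_norm]; simp
  have hU1one : U1 1 = 0 := by
    simp only [hU1, rder]; rw [h1 _ hnorm1]; rfl
  have hFone : F 1 = l := by simp only [hF]; rw [h0 _ hnorm1]; simp
  have pw : ∀ n : ℕ, ContinuousOn (fun r : ℝ => r ^ n) (Set.Icc 0 1) := fun n => by fun_prop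
  have dp : ∀ (n : ℕ) (r : ℝ), HasDerivAt (fun r : ℝ => r ^ n) (n * r ^ (n - 1)) r := fun n r => hasDerivAt_pow n r
  have ii : ∀ (n : ℕ) (c : ℝ), IntervalIntegrable (fun r => c * (r ^ n * F r)) volume 0 1 := fun n c => by
    apply ContinuousOn.intervalIntegrable
    rw [Set.uIcc_of_le zero_le_one]
    exact continuousOn_const.mul ((pw n).mul cF)
  have eP := intervalIntegral.integral_eq_sub_of_hasDerivAt_of_le (zero_le_one (α := ℝ))
    (f := fun r => r ^ 4 * (V1 r * U1 r) - r ^ 4 * (V r * V r / 2) + r ^ 3 * (2 * (U1 r * V r)) - r ^ 4 * F r)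
    (f' := fun r => (-4) * (r ^ 3 * F r))
    (by fun_prop) (fun r hr => by
      have hr0 : r ≠ 0 := hr.1.ne'
      refine (((((dp 4 r).mul ((dV1 r hr).mul (dU1 r hr))).sub ((dp 4 r).mul (((dV r hr).mul (dV r hr)).div_const 2))).add
        ((dp 3 r).mul (((dU1 r hr).mul (dV r hr)).const_mul 2))).sub ((dp 4 r).mul (dF r hr))).congr_deriv ?_
      simp only [Pi.mul_apply]
      push_cast
      norm_num only
      field_simp
      ring) (ii 3 (-4))
  have eQ := intervalIntegral.integral_eq_sub_of_hasDerivAt_of_le (zero_le_one (α := ℝ))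
    (f := fun r => r ^ 3 * (4 * U1 r) - r ^ 4 * V r + r ^ 5 * (V1 r / 2))
    (f' := fun r => (1 / 2) * (r ^ 5 * F r))
    (by fun_prop) (fun r hr => by
      have hr0 : r ≠ 0 := hr.1.ne'
      refine ((((dp 3 r).mul ((dU1 r hr).const_mul 4)).sub ((dp 4 r).mul (dV r hr))).add
        ((dp 5 r).mul ((dV1 r hr).div_const 2))).congr_deriv ?_
      push_cast
      norm_num only
      field_simp
      ring) (ii 5 (1 / 2))
  have eA := intervalIntegral.integral_eq_sub_of_hasDerivAt_of_le (zero_le_one (α := ℝ))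
    (f := fun r => r ^ 3 * V1 r)
    (f' := fun r => 1 * (r ^ 3 * F r))
    (by fun_prop) (fun r hr => by
      have hr0 : r ≠ 0 := hr.1.ne'
      refine ((dp 3 r).mul (dV1 r hr)).congr_deriv ?_
      push_cast
      norm_num only
      field_simp
      ring) (ii 3 1)
  rw [intervalIntegral.integral_const_mul] at eP eQ eA
  simp only [hU1one, hFone] at eP eQ eA
  norm_num at eP eQ eA
  have i1 : ∫ y in B1, l * Real.exp (u y) = 2 * Real.pi ^ 2 * ∫ r in (0:ℝ)..1, r ^ 3 * F r :=
    ball_radial fun x hx y hy hxy => by rw [hrad x hx y hy hxy]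
  have i2 : ∫ y in B1, ‖y‖ ^ 2 * (l * Real.exp (u y)) = 2 * Real.pi ^ 2 * ∫ r in (0:ℝ)..1, r ^ 5 * F r := by
    rw [ball_radial (g := fun y => ‖y‖ ^ 2 * (l * Real.exp (u y))) fun x hx y hy hxy => by rw [hrad x hx y hy hxy, hxy]]
    congr 1
    apply intervalIntegral.integral_congr
    intro r _
    simp only [smul_e0_norm, sq_abs, hF]
    ring
  rw [i1, i2]
  set X := ∫ r in (0:ℝ)..1, r ^ 3 * F r
  set Y := ∫ r in (0:ℝ)..1, r ^ 5 * F r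
  have hc : V 1 = X / 2 - Y / 2 := by linarith
  have hX : (X - Y) ^ 2 / 8 + l = 4 * X := by rw [hc] at eP; nlinarith
  have : l = 4 * X - (X - Y) ^ 2 / 8 := by linarith
  rw [this]
  ring





/-- One-dimensional information carried by a solution of the mean field problem:
`w` is the radial profile of the solution and `l = ρ / ∫ e^u`. -/
structure RadData (ρ T : ℝ) (w : ℝ → ℝ) (l : ℝ) : Prop where
  cont : Continuous w
  lpos : 0 < l
  anti : ∀ r s, 0 ≤ r → r ≤ s → s ≤ 1 → w s ≤ w r
  nonneg : ∀ r, 0 ≤ r → r ≤ 1 → 0 ≤ w r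
  top : w 0 = T
  mass : 2 * Real.pi ^ 2 * ∫ r in (0:ℝ)..1, r ^ 3 * (l * Real.exp (w r)) = ρ
  poh : (ρ - 2 * Real.pi ^ 2 * ∫ r in (0:ℝ)..1, r ^ 5 * (l * Real.exp (w r))) ^ 2
    + 32 * Real.pi ^ 4 * l = 64 * Real.pi ^ 2 * ρ
  upper : ∃ G : ℝ → ℝ, (∀ r, 0 < r → r < 1 → 0 ≤ G r ∧ G r ≤ 2 * Real.log (1 / r)) ∧
    IntervalIntegrable (fun r => r ^ 3 * (l * Real.exp (w r) * G r)) volume 0 1 ∧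
    16 * Real.pi ^ 2 * T = 2 * Real.pi ^ 2 * ∫ r in (0:ℝ)..1, r ^ 3 * (l * Real.exp (w r) * G r)
  lower : ∀ δ r, 0 < δ → δ ≤ r → r ≤ 1 / 8 →
    (2 * Real.log (1 / r) - Real.log 8 - 1) *
      (2 * Real.pi ^ 2 * ∫ s in (0:ℝ)..δ, s ^ 3 * (l * Real.exp (w s))) ≤ 16 * Real.pi ^ 2 * w r
  mean : 2 * Real.pi ^ 2 * ∫ r in (0:ℝ)..1, r ^ 3 * w r ≤ ρ / 192

lemma lap_phi (z : E4) : lap (fun y => qy y ^ 2) z = (quad 24 0 (-16)) z := by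
  have := lap_comp_quad (fun t => t ^ 2) (fun t => 2 * t) 2 (-1) 0 1 z
    (Eventually.of_forall fun t => by simpa using hasDerivAt_pow 2 t)
    (by simpa using (hasDerivAt_id (quad (-1) 0 1 z)).const_mul (2:ℝ))
  unfold qy
  rw [this]
  simp [quad]; ring

lemma mean_green {u f : E4 → ℝ} (hu : ContDiffOn ℝ 4 u CB)
    (h0 : ∀ x, ‖x‖ = 1 → u x = 0) (h1 : ∀ x, ‖x‖ = 1 → fderivWithin ℝ u CB x = 0)
    (hf : ∀ y ∈ B1, lap (lap u) y = f y) :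
    192 * ∫ y in B1, u y = ∫ y in B1, qy y ^ 2 * f y := by
  have hu2 : ContDiffOn ℝ 2 u CB := hu.of_le (by norm_num)
  have hv : ContDiffOn ℝ 2 (lapW u) CB := lapW_contDiffOn (m := 3) hu (by norm_num) (by norm_num)
  have hq : ContDiff ℝ 2 (fun y => qy y ^ 2) := qy_contDiff.pow 2
  have a := green (w := quad 24 0 (-16)) hu2 (quad_contDiff _ _ _).contDiffOn h0 h1
  have b := green (g := fun y => qy y ^ 2) (w := lapW u) hq.contDiffOn hv
    (fun x hx => by simp [qy_eq, hx]) (fun x hx => by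
      have hx' : x ∈ CB := by simp [hx]
      have hd : DifferentiableAt ℝ qy x := (qy_contDiff (n := 1)).differentiable one_ne_zero x
      change fderivWithin ℝ (qy ^ 2) CB x = 0
      rw [fderivWithin_eq_fderiv (uniqueDiffOn_CB x hx') (hd.pow 2)]
      have := hd.hasFDerivAt.pow 2
      change fderiv ℝ (fun y => qy y ^ 2) x = 0
      rw [this.fderiv]
      simp [qy_eq, hx])
  simp only [lap_phi] at b
  have a1 : ∫ x in B1, u x * lap (quad 24 0 (-16)) x = 192 * ∫ y in B1, u y := by
    rw [← integral_const_mul]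
    congr 1; ext x; rw [lap_quad]; ring
  rw [← a1, a]
  have b1 : ∫ y in B1, qy y ^ 2 * f y = ∫ x in B1, qy x ^ 2 * lap (lapW u) x := by
    refine setIntegral_congr_fun measurableSet_ball fun x hx => ?_
    simp only [lap_lapW_eq u hx, hf x hx]
  rw [b1, b]
  refine setIntegral_congr_fun measurableSet_ball fun x hx => ?_
  simp only [lapW_eq u hx]; ring

lemma GB_zero {r : ℝ} (h0 : 0 < r) (h1 : r < 1) :
    0 ≤ GB 0 (r • e0) ∧ GB 0 (r • e0) ≤ 2 * Real.log (1 / r) := by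
  have hy : r • e0 ∈ CB := by simp [smul_e0_norm, abs_of_pos h0, h1.le]
  refine ⟨GB_nonneg (by simp) hy, ?_⟩
  unfold GB
  have h2 : ‖r • e0‖ = r := by rw [smul_e0_norm, abs_of_pos h0]
  simp only [zero_sub, norm_neg, h2, norm_zero]
  have hp : 0 ≤ (1 - (0:ℝ) ^ 2) * (1 - r ^ 2) / r ^ 2 := by
    have : r ^ 2 ≤ 1 := by nlinarith
    have : 0 ≤ 1 - r ^ 2 := by linarith
    simp only [ne_eq, OfNat.ofNat_ne_zero, not_false_eq_true, zero_pow, sub_zero, one_mul]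
    positivity
  refine (hB_le_log hp).trans (le_of_eq ?_)
  have : 1 + (1 - (0:ℝ) ^ 2) * (1 - r ^ 2) / r ^ 2 = (1 / r) ^ 2 := by field_simp; ring
  rw [this, Real.log_pow]; norm_num

lemma GB_lower {x y : E4} {δ : ℝ} (hδ : δ ≤ ‖x‖) (hx : ‖x‖ ≤ 1 / 8) (hx0 : 0 < ‖x‖)
    (hy : ‖y‖ < δ) : 2 * Real.log (1 / ‖x‖) - Real.log 8 - 1 ≤ GB x y := by
  unfold GB hB
  set s := (1 - ‖x‖ ^ 2) * (1 - ‖y‖ ^ 2) / ‖x - y‖ ^ 2 with hs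
  have hne : 0 < ‖x - y‖ := by
    rw [norm_pos_iff, sub_ne_zero]; rintro rfl; linarith
  have h2 : ‖x - y‖ ≤ 2 * ‖x‖ := (norm_sub_le x y).trans (by linarith)
  have hyn := norm_nonneg y
  have hX : ‖x‖ ^ 2 ≤ 1 / 64 := by nlinarith
  have hY : ‖y‖ ^ 2 ≤ 1 / 64 := by nlinarith
  have h3 : 1 / (8 * ‖x‖ ^ 2) ≤ s := by
    rw [hs, div_le_div_iff₀ (by positivity) (by positivity)]
    have h4 : ‖x - y‖ ^ 2 ≤ 4 * ‖x‖ ^ 2 := by nlinarith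
    have h5 : 1 / 2 ≤ (1 - ‖x‖ ^ 2) * (1 - ‖y‖ ^ 2) := by nlinarith
    nlinarith [sq_nonneg ‖x‖]
  have hs0 : 0 < s := lt_of_lt_of_le (by positivity) h3
  have h6 : s / (1 + s) ≤ 1 := by rw [div_le_one (by linarith)]; linarith
  have h7 : Real.log (1 / (8 * ‖x‖ ^ 2)) ≤ Real.log (1 + s) :=
    Real.log_le_log (by positivity) (by linarith)
  have h8 : Real.log (1 / (8 * ‖x‖ ^ 2)) = 2 * Real.log (1 / ‖x‖) - Real.log 8 := by
    rw [one_div, Real.log_inv, Real.log_mul (by norm_num) (by positivity), Real.log_pow, one_div,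
      Real.log_inv]; push_cast; ring
  linarith





theorem rad_data {ρ : ℝ} {u : E4 → ℝ} (hρ : 0 < ρ) (hsol : IsMFSolution ρ u) :
    ∃ w l, RadData ρ (sSup (u '' CB)) w l := by
  obtain ⟨hu, hpde, hbd⟩ := hsol
  have h0 : ∀ x, ‖x‖ = 1 → u x = 0 := fun x hx => (hbd x hx).1
  have h1 : ∀ x, ‖x‖ = 1 → fderivWithin ℝ u CB x = 0 := fun x hx => (hbd x hx).2
  obtain ⟨K, hK⟩ := lipschitz_ext u (hu.of_le (by norm_num)) h0
  set U := Set.indicator CB u with hUdef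
  have hUc : Continuous U := hK.continuous
  have hUu : ∀ x ∈ CB, U x = u x := fun x hx => Set.indicator_of_mem hx u
  have hUB : ∀ x ∈ B1, U x = u x := fun x hx => hUu x (ball_subset_closedBall hx)
  have hE : 0 < ∫ y in B1, Real.exp (u y) := by
    have hi : IntegrableOn (fun y => Real.exp (u y)) B1 :=
      contOn_integrable (Real.continuous_exp.comp_continuousOn hu.continuousOn)
    rw [setIntegral_pos_iff_support_of_nonneg_ae (Eventually.of_forall fun x => (Real.exp_pos _).le) hi]
    have : Function.support (fun y => Real.exp (u y)) = Set.univ := by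
      ext x; simp [(Real.exp_pos (u x)).ne']
    rw [this, Set.univ_inter]
    exact measure_ball_pos _ _ one_pos
  set l := ρ / ∫ y in B1, Real.exp (u y) with hl
  have hlpos : 0 < l := div_pos hρ hE
  have hpde' : ∀ x ∈ B1, lap (lap u) x = l * Real.exp (u x) := by
    intro x hx; rw [hpde x hx, hl]; ring
  have hpdeU : ∀ x ∈ B1, lap (lap u) x = l * Real.exp (U x) := by
    intro x hx; rw [hpde' x hx, hUB x hx]
  have hrep : ∀ x ∈ B1, ∫ y in B1, l * Real.exp (U y) * GB x y = 16 * Real.pi ^ 2 * U x := by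
    intro x hx; rw [hUB x hx]; exact green_rep hu h0 h1 hx hpdeU
  have hUnn : ∀ x, 0 ≤ U x := by
    intro x
    by_cases hx : x ∈ B1
    · have := hrep x hx
      have h2 : 0 ≤ ∫ y in B1, l * Real.exp (U y) * GB x y := by
        refine setIntegral_nonneg measurableSet_ball fun y hy => ?_
        have := GB_nonneg (ball_subset_closedBall hx) (ball_subset_closedBall hy)
        positivity
      rw [this] at h2
      have : 0 < 16 * Real.pi ^ 2 := by positivity
      nlinarith
    · by_cases hxC : x ∈ CB
      · rw [hUu x hxC, h0 x]
        simp at hx hxC; linarith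
      · rw [hUdef, Set.indicator_of_notMem hxC]
  have hmono : ∀ x y : E4, y ∈ B1 → ‖x‖ ≤ ‖y‖ → U y ≤ U x := fun x y hy hxy =>
    radial_mono hUc hlpos hrep hy hxy
  have hrad : ∀ x ∈ B1, ∀ y ∈ B1, ‖x‖ = ‖y‖ → U x = U y := fun x hx y hy hxy =>
    le_antisymm (hmono y x hx hxy.ge) (hmono x y hy hxy.le)
  have hradu : ∀ x ∈ B1, ∀ y ∈ B1, ‖x‖ = ‖y‖ → u x = u y := fun x hx y hy hxy => by
    rw [← hUB x hx, ← hUB y hy, hrad x hx y hy hxy]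
  have hmass0 : ∫ y in B1, l * Real.exp (u y) = ρ := by
    rw [integral_const_mul, hl, div_mul_cancel₀ _ hE.ne']
  have hswap : ∫ y in B1, l * Real.exp (U y) = ∫ y in B1, l * Real.exp (u y) :=
    setIntegral_congr_fun measurableSet_ball fun y hy => by simp only [hUB y hy]
  set w : ℝ → ℝ := fun r => U (r • e0) with hw
  have hwc : Continuous w := by fun_prop
  have htop : w 0 = sSup (u '' CB) := by
    have : IsGreatest (u '' CB) (w 0) := by
      refine ⟨⟨0, by simp, by simp [hw, hUu]⟩, ?_⟩
      rintro _ ⟨x, hx, rfl⟩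
      have hw0 : w 0 = U 0 := by simp [hw]
      by_cases hxB : x ∈ B1
      · rw [← hUu x hx, hw0]
        exact hmono 0 x hxB (by simp)
      · rw [h0 x (by simp at hx hxB; linarith), hw0]
        exact hUnn 0
    exact this.csSup_eq.symm
  have hmassr : ∫ y in B1, l * Real.exp (U y) =
      2 * Real.pi ^ 2 * ∫ r in (0:ℝ)..1, r ^ 3 * (l * Real.exp (w r)) :=
    ball_radial fun x hx y hy hxy => by rw [hrad x hx y hy hxy]
  have hFpos : ∀ r, 0 < l * Real.exp (w r) := fun r => by positivity
  refine ⟨w, l, hwc, hlpos, ?_, fun r _ _ => hUnn _, htop, ?_, ?_, ?_, ?_, ?_⟩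
  · intro r s hr hrs hs
    rcases hs.lt_or_eq with hs | rfl
    · apply hmono
      · simpa [smul_e0_norm, abs_of_nonneg (hr.trans hrs)] using hs
      · rw [smul_e0_norm, smul_e0_norm, abs_of_nonneg hr, abs_of_nonneg (hr.trans hrs)]; exact hrs
    · have : w 1 = 0 := by
        simp only [hw]
        rw [hUu _ (by simp [e0_norm]), h0 _ (by simp [e0_norm])]
      rw [this]; exact hUnn _
  · rw [← hmassr, hswap, hmass0]
  · have hp := pohozaev hu h0 h1 hpde' hradu
    rw [hmass0] at hp
    rw [← hp]
    congr 3
    have : ∫ y in B1, ‖y‖ ^ 2 * (l * Real.exp (u y)) = ∫ y in B1, ‖y‖ ^ 2 * (l * Real.exp (U y)) :=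
      setIntegral_congr_fun measurableSet_ball fun y hy => by simp only [hUB y hy]
    rw [this, ball_radial (g := fun y => ‖y‖ ^ 2 * (l * Real.exp (U y)))
      fun x hx y hy hxy => by rw [hrad x hx y hy hxy, hxy]]
    congr 1
    apply intervalIntegral.integral_congr
    intro r _
    simp only [smul_e0_norm, sq_abs, hw]
    ring
  · refine ⟨fun r => GB 0 (r • e0), fun r hr hr1 => GB_zero hr hr1, ?_, ?_⟩
    · have hcF : Continuous fun r => l * Real.exp (w r) := by fun_prop
      have hg : IntervalIntegrable (fun r => 2 * (l * Real.exp (w r))) volume 0 1 :=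
        (continuous_const.mul hcF).intervalIntegrable _ _
      refine hg.mono_fun ?_ ?_
      · have hm : Measurable (fun r : ℝ => GB 0 (r • e0)) := (GB_meas 0).comp (by fun_prop)
        exact ((by fun_prop : Measurable fun r : ℝ => r ^ 3).mul
          (hcF.measurable.mul hm)).aestronglyMeasurable
      · rw [Set.uIoc_of_le zero_le_one]
        have hne : ∀ᵐ r : ℝ, r ≠ 1 := by
          simp [ae_iff, measure_singleton]
        filter_upwards [ae_restrict_mem measurableSet_Ioc, ae_restrict_of_ae hne] with r hr hr1
        have hr1 : r < 1 := lt_of_le_of_ne hr.2 hr1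
        obtain ⟨a, b⟩ := GB_zero hr.1 hr1
        have hF := hFpos r
        have hr0 := hr.1
        rw [Real.norm_of_nonneg (by positivity), Real.norm_of_nonneg (by positivity)]
        have h3 : Real.log (1 / r) ≤ 1 / r := (Real.log_le_sub_one_of_pos (by positivity)).trans (by linarith)
        have h4 : r ^ 3 * GB 0 (r • e0) ≤ 2 := by
          calc r ^ 3 * GB 0 (r • e0) ≤ r ^ 3 * (2 * (1 / r)) := by gcongr; linarith
            _ = 2 * r ^ 2 := by field_simp
            _ ≤ 2 := by nlinarith
        nlinarith
    · have := hrep 0 (by simp)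
      rw [← htop]
      have hw0 : w 0 = U 0 := by simp [hw]
      rw [hw0, ← this]
      refine ball_radial (g := fun y => l * Real.exp (U y) * GB 0 y) fun x hx y hy hxy => ?_
      simp only [hrad x hx y hy hxy, GB, zero_sub, norm_neg, hxy]
  · intro δ r hδ hδr hr
    have hr0 : 0 < r := hδ.trans_le hδr
    have hn : ‖r • e0‖ = r := by rw [smul_e0_norm, abs_of_pos hr0]
    have hxB : r • e0 ∈ B1 := by simp [hn]; linarith
    have h2 := hrep _ hxB
    change _ ≤ 16 * Real.pi ^ 2 * U (r • e0)
    rw [← h2]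
    set L := 2 * Real.log (1 / r) - Real.log 8 - 1 with hL
    set g : E4 → ℝ := Set.indicator (ball 0 δ) (fun y => l * Real.exp (U y)) with hg
    have hgi : IntegrableOn g B1 := by
      refine Integrable.indicator ?_ measurableSet_ball
      exact contOn_integrable (by fun_prop)
    have hgr : ∫ y in B1, g y = 2 * Real.pi ^ 2 * ∫ s in (0:ℝ)..δ, s ^ 3 * (l * Real.exp (w s)) := by
      rw [ball_radial (g := g) ?_]
      · congr 1
        rw [intervalIntegral.integral_of_le zero_le_one, intervalIntegral.integral_of_le hδ.le,
          integral_Ioc_eq_integral_Ioo (y := δ)]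
        have : ∀ s ∈ Set.Ioc (0:ℝ) 1, s ^ 3 * g (s • e0) =
            Set.indicator (Set.Ioo 0 δ) (fun s => s ^ 3 * (l * Real.exp (w s))) s := by
          intro s hs
          have hns : ‖s • e0‖ = s := by rw [smul_e0_norm, abs_of_pos hs.1]
          by_cases hsd : s < δ
          · rw [Set.indicator_of_mem (show s ∈ Set.Ioo 0 δ from ⟨hs.1, hsd⟩), hg, Set.indicator_of_mem (by simpa [hns] using hsd)]
          · rw [Set.indicator_of_notMem (show s ∉ Set.Ioo 0 δ from fun h => hsd h.2), hg,
              Set.indicator_of_notMem (by simpa [hns] using hsd), mul_zero]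
        rw [setIntegral_congr_fun measurableSet_Ioc this, setIntegral_indicator measurableSet_Ioo]
        congr 2
        ext s; simp only [Set.mem_inter_iff, Set.mem_Ioc, Set.mem_Ioo]
        constructor
        · exact fun h => h.2
        · exact fun h => ⟨⟨h.1, by linarith [h.2]⟩, h⟩
      · intro x hx y hy hxy
        simp only [hg, Set.indicator, mem_ball_zero_iff, hxy, hrad x hx y hy hxy]
    rw [← hgr, ← integral_const_mul]
    refine setIntegral_mono_on (hgi.const_mul L) (fG_int hUc hxB l) measurableSet_ball fun y hy => ?_
    have hF : 0 < l * Real.exp (U y) := by positivity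
    have hGn := GB_nonneg (ball_subset_closedBall hxB) (ball_subset_closedBall hy)
    by_cases hyd : y ∈ ball (0:E4) δ
    · rw [hg, Set.indicator_of_mem hyd]
      have := GB_lower (x := r • e0) (y := y) (δ := δ) (by rw [hn]; exact hδr) (by rw [hn]; exact hr)
        (by rw [hn]; exact hr0) (by simpa using hyd)
      rw [hn] at this
      nlinarith
    · rw [hg, Set.indicator_of_notMem hyd, mul_zero]
      positivity
  · have hm := mean_green hu h0 h1 hpde'
    have hr := ball_radial (g := U) hrad
    have e1 : ∫ y in B1, U y = ∫ y in B1, u y :=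
      setIntegral_congr_fun measurableSet_ball fun y hy => by simp only [hUB y hy]
    have e2 : ∫ y in B1, qy y ^ 2 * (l * Real.exp (u y)) ≤ ∫ y in B1, l * Real.exp (u y) := by
      have hc : ContinuousOn (fun y => l * Real.exp (u y)) CB :=
        continuousOn_const.mul (Real.continuous_exp.comp_continuousOn hu.continuousOn)
      refine setIntegral_mono_on (contOn_integrable (ContinuousOn.mul ?_ hc)) (contOn_integrable hc)
        measurableSet_ball fun y hy => ?_
      · exact ((qy_contDiff (n := 0)).continuous.pow 2).continuousOn
      · rw [qy_eq]
        have hy1 : ‖y‖ < 1 := by simpa using hy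
        have hy2 : ‖y‖ ^ 2 < 1 := by nlinarith [norm_nonneg y]
        have : (1 - ‖y‖ ^ 2) ^ 2 ≤ 1 := by nlinarith [sq_nonneg ‖y‖]
        have : 0 < l * Real.exp (u y) := by positivity
        nlinarith
    change 2 * Real.pi ^ 2 * ∫ r in (0:ℝ)..1, r ^ 3 * U (r • e0) ≤ _
    rw [← hr, e1]
    rw [hmass0] at e2
    linarith




namespace RadData

variable {ρ T l Λ : ℝ} {w : ℝ → ℝ}

lemma contF (h : RadData ρ T w l) : Continuous fun r : ℝ => r ^ 3 * (l * Real.exp (w r)) := by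
  have := h.cont
  fun_prop

lemma iF (h : RadData ρ T w l) (a b : ℝ) :
    IntervalIntegrable (fun r : ℝ => r ^ 3 * (l * Real.exp (w r))) volume a b :=
  h.contF.intervalIntegrable a b

lemma Fpos (h : RadData ρ T w l) {r : ℝ} (hr : 0 ≤ r) : 0 ≤ r ^ 3 * (l * Real.exp (w r)) := by
  have := h.lpos
  positivity

lemma part_nonneg (h : RadData ρ T w l) {a b : ℝ} (ha : 0 ≤ a) (hab : a ≤ b) :
    0 ≤ ∫ r in a..b, r ^ 3 * (l * Real.exp (w r)) :=
  intervalIntegral.integral_nonneg hab fun r hr => h.Fpos (ha.trans hr.1)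

lemma split2 (h : RadData ρ T w l) (a b c : ℝ) :
    (∫ r in a..b, r ^ 3 * (l * Real.exp (w r))) + (∫ r in b..c, r ^ 3 * (l * Real.exp (w r)))
      = ∫ r in a..c, r ^ 3 * (l * Real.exp (w r)) :=
  intervalIntegral.integral_add_adjacent_intervals (h.iF a b) (h.iF b c)

lemma l_le (h : RadData ρ T w l) : l ≤ ρ := by
  have h1 : ∫ r in (0:ℝ)..1, r ^ 3 * l ≤ ∫ r in (0:ℝ)..1, r ^ 3 * (l * Real.exp (w r)) := by
    refine intervalIntegral.integral_mono_on zero_le_one ?_ (h.iF _ _) fun r hr => ?_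
    · exact (by fun_prop : Continuous fun r : ℝ => r ^ 3 * l).intervalIntegrable _ _
    · have := Real.one_le_exp (h.nonneg r hr.1 hr.2)
      have := h.lpos
      have := hr.1
      gcongr
      nlinarith
  rw [intervalIntegral.integral_mul_const, integral_pow] at h1
  norm_num at h1
  have h2 := h.mass
  have h3 := Real.pi_gt_three
  have h4 := h.lpos
  have h5 : 9 < Real.pi ^ 2 := by nlinarith
  nlinarith

/-- almost all the needed mass concentrates in small balls -/
lemma conc (h : RadData ρ T w l) (hΛ : ρ ≤ Λ) {δ : ℝ} (hδ : 0 < δ) (hδ1 : δ < 1)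
    (hT : Real.exp (-(T / 4)) ≤ δ) :
    32 * Real.pi ^ 2 * T ≤ T * (2 * Real.pi ^ 2 * ∫ r in (0:ℝ)..δ, r ^ 3 * (l * Real.exp (w r)))
      + Λ * (4 * Real.log (1 / δ) + 32) := by
  obtain ⟨G, hG, hGi, hGe⟩ := h.upper
  set R := Real.exp (-(T / 4)) with hR
  have hR0 : 0 < R := Real.exp_pos _
  have hlp := h.lpos
  have hll := h.l_le
  have hlogR : Real.log (1 / R) = T / 4 := by rw [hR, one_div, Real.log_inv, Real.log_exp]; ring
  have hδR : R ≤ 1 := hT.trans hδ1.le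
  have s1 : Set.uIcc 0 R ⊆ Set.uIcc (0:ℝ) 1 := by
    rw [Set.uIcc_of_le hR0.le, Set.uIcc_of_le zero_le_one]; exact Set.Icc_subset_Icc le_rfl hδR
  have s2 : Set.uIcc R δ ⊆ Set.uIcc (0:ℝ) 1 := by
    rw [Set.uIcc_of_le hT, Set.uIcc_of_le zero_le_one]; exact Set.Icc_subset_Icc hR0.le hδ1.le
  have s3 : Set.uIcc δ 1 ⊆ Set.uIcc (0:ℝ) 1 := by
    rw [Set.uIcc_of_le hδ1.le, Set.uIcc_of_le zero_le_one]; exact Set.Icc_subset_Icc hδ.le le_rfl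
  have i1 := hGi.mono_set s1
  have i2 := hGi.mono_set s2
  have i3 := hGi.mono_set s3
  have e := intervalIntegral.integral_add_adjacent_intervals (i1.trans i2) i3
  rw [← intervalIntegral.integral_add_adjacent_intervals i1 i2] at e
  have hcr : Continuous fun r : ℝ => 2 * l * Real.exp T * R * r ^ 2 := by fun_prop
  have b1 : ∫ r in (0:ℝ)..R, r ^ 3 * (l * Real.exp (w r) * G r) ≤
      ∫ r in (0:ℝ)..R, (T / 2 * (r ^ 3 * (l * Real.exp (w r))) + 2 * l * Real.exp T * R * r ^ 2) := by
    refine intervalIntegral.integral_mono_on_of_le_Ioo hR0.le i1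
      (((h.iF 0 R).const_mul _).add (hcr.intervalIntegrable _ _)) fun r hr => ?_
    obtain ⟨hr0, hrR⟩ := hr
    have g := (hG r hr0 (hrR.trans_le hδR)).2
    have e1 : Real.log (1 / r) = T / 4 + Real.log (R / r) := by
      rw [← hlogR, one_div, one_div, Real.log_inv, Real.log_inv, Real.log_div hR0.ne' hr0.ne']; ring
    have e2 : Real.log (R / r) ≤ R / r := (Real.log_le_sub_one_of_pos (by positivity)).trans (by linarith)
    have e3 : Real.exp (w r) ≤ Real.exp T := by
      rw [← h.top]
      exact Real.exp_le_exp.2 (h.anti 0 r le_rfl hr0.le (hrR.le.trans hδR))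
    calc r ^ 3 * (l * Real.exp (w r) * G r)
        ≤ r ^ 3 * (l * Real.exp (w r) * (T / 2 + 2 * (R / r))) := by
          gcongr
          linarith
      _ = T / 2 * (r ^ 3 * (l * Real.exp (w r))) + 2 * l * Real.exp (w r) * R * r ^ 2 := by
          field_simp
      _ ≤ _ := by gcongr
  have b2 : ∫ r in R..δ, r ^ 3 * (l * Real.exp (w r) * G r) ≤
      ∫ r in R..δ, (T / 2 * (r ^ 3 * (l * Real.exp (w r)))) := by
    refine intervalIntegral.integral_mono_on_of_le_Ioo hT i2 ((h.iF R δ).const_mul _) fun r hr => ?_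
    obtain ⟨hrR, hrδ⟩ := hr
    have hr0 := hR0.trans hrR
    have g := (hG r hr0 (hrδ.trans hδ1)).2
    have e1 : Real.log (1 / r) ≤ T / 4 := by
      rw [← hlogR]
      exact Real.log_le_log (by positivity) (one_div_le_one_div_of_le hR0 hrR.le)
    calc r ^ 3 * (l * Real.exp (w r) * G r)
        ≤ r ^ 3 * (l * Real.exp (w r) * (T / 2)) := by
          gcongr
          linarith
      _ = _ := by ring
  have b3 : ∫ r in δ..1, r ^ 3 * (l * Real.exp (w r) * G r) ≤
      ∫ r in δ..1, (2 * Real.log (1 / δ) * (r ^ 3 * (l * Real.exp (w r)))) := by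
    refine intervalIntegral.integral_mono_on_of_le_Ioo hδ1.le i3 ((h.iF δ 1).const_mul _) fun r hr => ?_
    obtain ⟨hrδ, hr1⟩ := hr
    have hr0 := hδ.trans hrδ
    have g := (hG r hr0 hr1).2
    have e1 : Real.log (1 / r) ≤ Real.log (1 / δ) :=
      Real.log_le_log (by positivity) (one_div_le_one_div_of_le hδ hrδ.le)
    calc r ^ 3 * (l * Real.exp (w r) * G r)
        ≤ r ^ 3 * (l * Real.exp (w r) * (2 * Real.log (1 / δ))) := by
          gcongr
          linarith
      _ = _ := by ring
  rw [intervalIntegral.integral_add ((h.iF 0 R).const_mul _) (hcr.intervalIntegrable _ _),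
    intervalIntegral.integral_const_mul, intervalIntegral.integral_const_mul, integral_pow] at b1
  rw [intervalIntegral.integral_const_mul] at b2 b3
  have hRT : R ^ 4 * Real.exp T = 1 := by
    rw [hR, ← Real.exp_nat_mul, ← Real.exp_add]
    simp; ring
  have b1' : 2 * l * Real.exp T * R * ((R ^ (2 + 1) - 0 ^ (2 + 1)) / ((2:ℕ) + 1)) = 2 / 3 * l := by
    calc _ = 2 / 3 * l * (R ^ 4 * Real.exp T) := by push_cast; ring
      _ = _ := by rw [hRT, mul_one]
  rw [b1'] at b1
  have m1 := h.split2 0 R δ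
  have m2 := h.split2 0 δ 1
  have m3 := h.part_nonneg le_rfl hδ.le
  have m4 := h.mass
  have hlogδ : 0 ≤ Real.log (1 / δ) := Real.log_nonneg (by rw [le_div_iff₀ hδ]; linarith)
  set X := ∫ r in (0:ℝ)..δ, r ^ 3 * (l * Real.exp (w r))
  set Y := ∫ r in δ..1, r ^ 3 * (l * Real.exp (w r))
  set Lg := Real.log (1 / δ)
  have key : ∫ r in (0:ℝ)..1, r ^ 3 * (l * Real.exp (w r) * G r) ≤ T / 2 * X + 2 / 3 * l + 2 * Lg * Y := by
    rw [← e, ← m1]; linarith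
  have hpi2 : Real.pi ^ 2 < 10 := by nlinarith [Real.pi_lt_d2, Real.pi_gt_three]
  have hpi0 : 0 < Real.pi ^ 2 := by positivity
  have k2 := mul_le_mul_of_nonneg_left key (by positivity : 0 ≤ 4 * Real.pi ^ 2)
  have y1 : 2 * Real.pi ^ 2 * Y ≤ Λ := by
    rw [← m2] at m4; nlinarith
  have y2 : 4 * Lg * (2 * Real.pi ^ 2 * Y) ≤ 4 * Lg * Λ := mul_le_mul_of_nonneg_left y1 (by positivity)
  have y3 : Real.pi ^ 2 * l ≤ 10 * Λ := by nlinarith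
  have hΛ0 : 0 ≤ Λ := by linarith
  nlinarith

lemma l_small (h : RadData ρ T w l) (hΛ : ρ ≤ Λ) {δ : ℝ} (hδ : 0 < δ) (hδ1 : δ < 1 / 8) (hT0 : 0 < T)
    (hT : Real.exp (-(T / 4)) ≤ δ)
    (hT2 : Λ * (4 * Real.log (1 / δ) + 32) * (2 * Real.log (1 / δ)) ≤ 16 * Real.pi ^ 2 * T) :
    2 * Real.pi ^ 2 * Real.exp (-2 * Real.log 8 - 3) * Real.log (1 / (8 * δ)) * l ≤ Λ := by
  have hc := h.conc hΛ hδ (by linarith) hT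
  have hlp := h.lpos
  set M := 2 * Real.pi ^ 2 * ∫ r in (0:ℝ)..δ, r ^ 3 * (l * Real.exp (w r)) with hM
  set C := Λ * (4 * Real.log (1 / δ) + 32) with hC
  have hlogδ : 0 ≤ Real.log (1 / δ) := Real.log_nonneg (by rw [le_div_iff₀ hδ]; linarith)
  have hΛ0 : 0 ≤ Λ := by linarith [h.l_le]
  have hC0 : 0 ≤ C := by positivity
  have hlog8 : 1 ≤ Real.log 8 := by
    rw [Real.le_log_iff_exp_le (by norm_num)]
    linarith [Real.exp_one_lt_d9]
  have hpt : ∀ r, δ ≤ r → r ≤ 1 / 8 → Real.exp (-2 * Real.log 8 - 3) * (1 / r) ^ 4 ≤ Real.exp (w r) := by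
    intro r hr1 hr2
    have hr0 := hδ.trans_le hr1
    have hlow := h.lower δ r hδ hr1 hr2
    rw [← hM] at hlow
    set L := 2 * Real.log (1 / r) - Real.log 8 - 1 with hL
    have e1 : Real.log (1 / r) ≤ Real.log (1 / δ) :=
      Real.log_le_log (by positivity) (one_div_le_one_div_of_le hδ hr1)
    have e2 : Real.log 8 ≤ Real.log (1 / r) :=
      Real.log_le_log (by norm_num) (by rw [le_div_iff₀ hr0]; linarith)
    have hL0 : 0 ≤ L := by linarith
    have hL1 : L ≤ 2 * Real.log (1 / δ) := by linarith
    have q1 : L * (32 * Real.pi ^ 2 * T) ≤ L * (T * M + C) := mul_le_mul_of_nonneg_left hc hL0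
    have q2 : L * C ≤ 16 * Real.pi ^ 2 * T := (mul_le_mul_of_nonneg_right hL1 hC0).trans (by linarith)
    have q3 : T * (L * M) ≤ T * (16 * Real.pi ^ 2 * w r) := mul_le_mul_of_nonneg_left hlow hT0.le
    have q4 : 0 ≤ (16 * Real.pi ^ 2 * T) * (w r + 1 - 2 * L) := by nlinarith
    have q5 : 0 ≤ w r + 1 - 2 * L := nonneg_of_mul_nonneg_right q4 (by positivity)
    have q6 : (1 / r) ^ 4 = Real.exp (4 * Real.log (1 / r)) := by
      rw [← Real.exp_log (by positivity : 0 < (1 / r) ^ 4), Real.log_pow]; norm_num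
    rw [q6, ← Real.exp_add]
    apply Real.exp_le_exp.2
    linarith
  set c0 := Real.exp (-2 * Real.log 8 - 3)
  have hc0 : 0 < c0 := Real.exp_pos _
  have a1 : ∫ r in δ..(1/8), l * c0 * r⁻¹ ≤ ∫ r in δ..(1/8), r ^ 3 * (l * Real.exp (w r)) := by
    refine intervalIntegral.integral_mono_on hδ1.le ?_ (h.iF _ _) fun r hr => ?_
    · refine ContinuousOn.intervalIntegrable ?_
      rw [Set.uIcc_of_le hδ1.le]
      refine continuousOn_const.mul (continuousOn_id.inv₀ fun r hr => (hδ.trans_le hr.1).ne')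
    · have hr0 := hδ.trans_le hr.1
      calc l * c0 * r⁻¹ = r ^ 3 * (l * (c0 * (1 / r) ^ 4)) := by field_simp
        _ ≤ _ := by
          have := hpt r hr.1 hr.2
          gcongr
  rw [intervalIntegral.integral_const_mul, integral_inv_of_pos hδ (by norm_num)] at a1
  have e8 : (1 / 8 : ℝ) / δ = 1 / (8 * δ) := by field_simp
  rw [e8] at a1
  have m1 := h.split2 0 δ 1
  have m2 := h.split2 δ (1 / 8) 1
  have p1 := h.part_nonneg le_rfl hδ.le
  have p2 := h.part_nonneg (a := 1 / 8) (b := 1) (by norm_num) (by norm_num)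
  have mm := h.mass
  have a2 : l * c0 * Real.log (1 / (8 * δ)) ≤ ∫ r in (0:ℝ)..1, r ^ 3 * (l * Real.exp (w r)) := by
    linarith
  have a3 := mul_le_mul_of_nonneg_left a2 (by positivity : 0 ≤ 2 * Real.pi ^ 2)
  linarith

lemma w_le (h : RadData ρ T w l) (hΛ : ρ ≤ Λ) {δ : ℝ} (hδ : 0 < δ) (hδ1 : δ < 1) :
    w δ ≤ Λ / δ ^ 4 := by
  have hcw : Continuous fun r : ℝ => r ^ 3 * w r := by have := h.cont; fun_prop
  have a1 : ∫ r in (0:ℝ)..δ, r ^ 3 * w δ ≤ ∫ r in (0:ℝ)..δ, r ^ 3 * w r := by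
    refine intervalIntegral.integral_mono_on hδ.le
      ((by fun_prop : Continuous fun r : ℝ => r ^ 3 * w δ).intervalIntegrable _ _)
      (hcw.intervalIntegrable _ _) fun r hr => ?_
    have := h.anti r δ hr.1 hr.2 hδ1.le
    have := hr.1
    gcongr
  have a2 : 0 ≤ ∫ r in δ..1, r ^ 3 * w r := by
    refine intervalIntegral.integral_nonneg hδ1.le fun r hr => ?_
    have hr0 := hδ.le.trans hr.1
    have := h.nonneg r hr0 hr.2
    positivity
  have a3 := intervalIntegral.integral_add_adjacent_intervals (μ := volume) (hcw.intervalIntegrable 0 δ)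
    (hcw.intervalIntegrable δ 1)
  rw [intervalIntegral.integral_mul_const, integral_pow] at a1
  have a4 := h.mean
  rw [← a3] at a4
  norm_num at a1
  have hw := h.nonneg δ hδ.le hδ1.le
  rw [le_div_iff₀ (by positivity)]
  have h5 : 9 < Real.pi ^ 2 := by nlinarith [Real.pi_gt_three]
  have hΛ0 : 0 ≤ Λ := by linarith [h.l_le, h.lpos]
  have : 0 ≤ δ ^ 4 * w δ := by positivity
  nlinarith

lemma I_le (h : RadData ρ T w l) (hΛ : ρ ≤ Λ) {δ : ℝ} (hδ : 0 < δ) (hδ1 : δ < 1) :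
    2 * Real.pi ^ 2 * ∫ r in (0:ℝ)..1, r ^ 5 * (l * Real.exp (w r)) ≤
      δ ^ 2 * Λ + 20 * Real.exp (Λ / δ ^ 4) * l := by
  have hlp := h.lpos
  have hw := h.w_le hΛ hδ hδ1
  have hc := h.cont
  have a1 : ∫ r in (0:ℝ)..1, r ^ 5 * (l * Real.exp (w r)) ≤
      ∫ r in (0:ℝ)..1, (δ ^ 2 * (r ^ 3 * (l * Real.exp (w r))) + l * Real.exp (Λ / δ ^ 4)) := by
    refine intervalIntegral.integral_mono_on zero_le_one
      ((by fun_prop : Continuous fun r : ℝ => r ^ 5 * (l * Real.exp (w r))).intervalIntegrable _ _)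
      (((h.iF 0 1).const_mul _).add (continuous_const.intervalIntegrable _ _)) fun r hr => ?_
    have hr0 := hr.1
    have hr1 := hr.2
    rcases le_total r δ with hrd | hrd
    · have e1 : r ^ 5 * (l * Real.exp (w r)) = r ^ 2 * (r ^ 3 * (l * Real.exp (w r))) := by ring
      have e2 : r ^ 2 * (r ^ 3 * (l * Real.exp (w r))) ≤ δ ^ 2 * (r ^ 3 * (l * Real.exp (w r))) := by gcongr
      have e3 : 0 ≤ l * Real.exp (Λ / δ ^ 4) := by positivity
      linarith
    · have e1 : r ^ 5 ≤ 1 := pow_le_one₀ hr0 hr1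
      have e2 : Real.exp (w r) ≤ Real.exp (Λ / δ ^ 4) :=
        Real.exp_le_exp.2 ((h.anti δ r hδ.le hrd hr1).trans hw)
      have e3 : r ^ 5 * (l * Real.exp (w r)) ≤ 1 * (l * Real.exp (Λ / δ ^ 4)) := by gcongr
      have e4 : 0 ≤ δ ^ 2 * (r ^ 3 * (l * Real.exp (w r))) := by positivity
      linarith
  rw [intervalIntegral.integral_add ((h.iF 0 1).const_mul _) (continuous_const.intervalIntegrable _ _),
    intervalIntegral.integral_const_mul, intervalIntegral.integral_const] at a1
  simp only [sub_zero, one_smul] at a1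
  have a2 := mul_le_mul_of_nonneg_left a1 (by positivity : 0 ≤ 2 * Real.pi ^ 2)
  have hpi2 : Real.pi ^ 2 < 10 := by nlinarith [Real.pi_lt_d2, Real.pi_gt_three]
  have mm := h.mass
  have e3 : 0 ≤ l * Real.exp (Λ / δ ^ 4) := by positivity
  have e5 : δ ^ 2 * ρ ≤ δ ^ 2 * Λ := by gcongr
  have e6 : Real.pi ^ 2 * (l * Real.exp (Λ / δ ^ 4)) ≤ 10 * (l * Real.exp (Λ / δ ^ 4)) := by gcongr
  have e7 : 2 * Real.pi ^ 2 * (δ ^ 2 * ∫ r in (0:ℝ)..1, r ^ 3 * (l * Real.exp (w r))) = δ ^ 2 * ρ := by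
    rw [← mm]; ring
  linarith

lemma I_nonneg (h : RadData ρ T w l) :
    0 ≤ 2 * Real.pi ^ 2 * ∫ r in (0:ℝ)..1, r ^ 5 * (l * Real.exp (w r)) := by
  have hlp := h.lpos
  have : 0 ≤ ∫ r in (0:ℝ)..1, r ^ 5 * (l * Real.exp (w r)) :=
    intervalIntegral.integral_nonneg zero_le_one fun r hr => by
      have := hr.1
      positivity
  positivity

end RadData

theorem rad_limit {Λ : ℝ} {ρ T l : ℕ → ℝ} {w : ℕ → ℝ → ℝ} (hρ : ∀ k, 0 < ρ k ∧ ρ k ≤ Λ)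
    (hT : Tendsto T atTop atTop) (h : ∀ k, RadData (ρ k) (T k) (w k) (l k)) :
    Tendsto ρ atTop (nhds (64 * Real.pi ^ 2)) := by
  have hΛ : 0 < Λ := (hρ 0).1.trans_le (hρ 0).2
  have hexp : ∀ δ > 0, ∀ᶠ k in atTop, Real.exp (-(T k / 4)) ≤ δ := by
    intro δ hδ
    filter_upwards [hT.eventually_ge_atTop (-4 * Real.log δ)] with k hk
    rw [← Real.exp_log hδ]
    exact Real.exp_le_exp.2 (by linarith)
  have hl0 : Tendsto l atTop (nhds 0) := by
    rw [Metric.tendsto_atTop']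
    intro ε hε
    set c := 2 * Real.pi ^ 2 * Real.exp (-2 * Real.log 8 - 3) with hc
    have hc0 : 0 < c := by positivity
    set A := 2 * Λ / (c * ε) with hA
    have hA0 : 0 < A := by positivity
    set δ := Real.exp (-A) / 8 with hδ
    have hδ0 : 0 < δ := by positivity
    have hδ1 : δ < 1 / 8 := by
      have : Real.exp (-A) < 1 := by rw [Real.exp_lt_one_iff]; linarith
      rw [hδ]; linarith
    have hlog : Real.log (1 / (8 * δ)) = A := by
      rw [hδ, mul_div_cancel₀ _ (by norm_num), one_div, ← Real.exp_neg, Real.log_exp, neg_neg]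
    have ev : ∀ᶠ k in atTop, dist (l k) 0 < ε := by
      filter_upwards [hexp δ hδ0, hT.eventually_gt_atTop 0, hT.eventually_ge_atTop
        (Λ * (4 * Real.log (1 / δ) + 32) * (2 * Real.log (1 / δ)) / (16 * Real.pi ^ 2))] with k k1 k2 k3
      have := (h k).l_small (hρ k).2 hδ0 hδ1 k2 k1 (by
        rw [div_le_iff₀ (by positivity)] at k3; linarith)
      rw [← hc, hlog] at this
      rw [Real.dist_0_eq_abs, abs_of_pos (h k).lpos]
      have e : c * A = 2 * Λ / ε := by rw [hA]; field_simp
      rw [e] at this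
      have h2 : 2 * Λ * l k ≤ Λ * ε := by
        rw [div_mul_eq_mul_div, div_le_iff₀ hε] at this; exact this
      by_contra hcon
      push Not at hcon
      nlinarith
    obtain ⟨N, hN⟩ := eventually_atTop.1 ev
    exact ⟨N, fun n hn => hN n hn.le⟩
  set I : ℕ → ℝ := fun k => 2 * Real.pi ^ 2 * ∫ r in (0:ℝ)..1, r ^ 5 * (l k * Real.exp (w k r)) with hI
  have hI0 : Tendsto I atTop (nhds 0) := by
    rw [Metric.tendsto_atTop']
    intro ε hε
    obtain ⟨δ, hδ0, hδ1, hδ2⟩ : ∃ δ : ℝ, 0 < δ ∧ δ < 1 ∧ δ ^ 2 * Λ < ε / 2 := by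
      have h1 : Tendsto (fun δ : ℝ => δ ^ 2 * Λ) (nhdsWithin 0 (Set.Ioi 0)) (nhds 0) := by
        have : Tendsto (fun δ : ℝ => δ ^ 2 * Λ) (nhds 0) (nhds (0 ^ 2 * Λ)) :=
          (by fun_prop : Continuous fun δ : ℝ => δ ^ 2 * Λ).tendsto 0
        simp only [ne_eq, OfNat.ofNat_ne_zero, not_false_eq_true, zero_pow, zero_mul] at this
        exact this.mono_left nhdsWithin_le_nhds
      have h2 := h1.eventually_lt_const (half_pos hε)
      obtain ⟨δ, a, b⟩ := (h2.and (Ioo_mem_nhdsGT (zero_lt_one (α := ℝ)))).exists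
      exact ⟨δ, b.1, b.2, a⟩
    have h3 : Tendsto (fun k => 20 * Real.exp (Λ / δ ^ 4) * l k) atTop (nhds 0) := by
      simpa using hl0.const_mul (20 * Real.exp (Λ / δ ^ 4))
    have ev : ∀ᶠ k in atTop, dist (I k) 0 < ε := by
      filter_upwards [h3.eventually_lt_const (half_pos hε)] with k hk
      rw [Real.dist_0_eq_abs, abs_of_nonneg (h k).I_nonneg]
      have := (h k).I_le (hρ k).2 hδ0 hδ1
      linarith
    obtain ⟨N, hN⟩ := eventually_atTop.1 ev
    exact ⟨N, fun n hn => hN n hn.le⟩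
  have hlow : ∀ᶠ k in atTop, 16 * Real.pi ^ 2 ≤ ρ k := by
    filter_upwards [hexp (1 / 2) (by norm_num), hT.eventually_gt_atTop 0, hT.eventually_ge_atTop
        (Λ * (4 * Real.log (1 / (1 / 2)) + 32) / (16 * Real.pi ^ 2))] with k k1 k2 k3
    have hc := (h k).conc (hρ k).2 (by norm_num) (by norm_num) k1
    rw [div_le_iff₀ (by positivity)] at k3
    have m1 := (h k).split2 0 (1 / 2) 1
    have p2 := (h k).part_nonneg (a := 1 / 2) (b := 1) (by norm_num) (by norm_num)
    have mm := (h k).mass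
    have q : 2 * Real.pi ^ 2 * ∫ r in (0:ℝ)..(1/2), r ^ 3 * (l k * Real.exp (w k r)) ≤ ρ k := by
      rw [← mm]; gcongr; linarith
    have q2 := mul_le_mul_of_nonneg_left q k2.le
    have q3 : 0 ≤ T k * (ρ k - 16 * Real.pi ^ 2) := by nlinarith
    have := nonneg_of_mul_nonneg_right q3 k2
    linarith
  have hb : Tendsto (fun k => (2 * Λ * I k + I k ^ 2 + 32 * Real.pi ^ 4 * l k) / (16 * Real.pi ^ 2))
      atTop (nhds 0) := by
    have := ((((hI0.const_mul (2 * Λ)).add (hI0.pow 2)).add (hl0.const_mul (32 * Real.pi ^ 4))).div_const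
      (16 * Real.pi ^ 2))
    simpa using this
  rw [tendsto_iff_dist_tendsto_zero]
  refine squeeze_zero' (Eventually.of_forall fun _ => dist_nonneg) ?_ hb
  filter_upwards [hlow] with k hk
  have hp : (ρ k - I k) ^ 2 + 32 * Real.pi ^ 4 * l k = 64 * Real.pi ^ 2 * ρ k := (h k).poh
  have hIn : 0 ≤ I k := (h k).I_nonneg
  have hlp := (h k).lpos
  have hpi : 0 < Real.pi ^ 4 := by positivity
  rw [Real.dist_eq, le_div_iff₀ (by positivity)]
  have e1 : ρ k * (ρ k - 64 * Real.pi ^ 2) = 2 * ρ k * I k - I k ^ 2 - 32 * Real.pi ^ 4 * l k := by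
    linarith
  have e2 : |ρ k - 64 * Real.pi ^ 2| * ρ k = |2 * ρ k * I k - I k ^ 2 - 32 * Real.pi ^ 4 * l k| := by
    rw [← e1, abs_mul, abs_of_pos (hρ k).1, mul_comm]
  have e3 : |2 * ρ k * I k - I k ^ 2 - 32 * Real.pi ^ 4 * l k| ≤
      2 * Λ * I k + I k ^ 2 + 32 * Real.pi ^ 4 * l k := by
    have a : ρ k * I k ≤ Λ * I k := mul_le_mul_of_nonneg_right (hρ k).2 hIn
    have b : 0 ≤ ρ k * I k := mul_nonneg (hρ k).1.le hIn
    have c : 0 ≤ Real.pi ^ 4 * l k := by positivity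
    have d := sq_nonneg (I k)
    rw [abs_le]; constructor <;> linarith
  calc |ρ k - 64 * Real.pi ^ 2| * (16 * Real.pi ^ 2) ≤ |ρ k - 64 * Real.pi ^ 2| * ρ k := by gcongr
    _ ≤ _ := by rw [e2]; exact e3



/-- Quantization of the mean field parameter: if solutions `u_k` with `0 < ρ_k ≤ Λ` blow
up, then along a subsequence `ρ_k → 64π² m` for some positive integer `m`. -/
theorem mean_field_quantization (Λ : ℝ) (hΛ : 0 < Λ)
    (ρ : ℕ → ℝ) (u : ℕ → EuclideanSpace ℝ (Fin 4) → ℝ)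
    (hρ : ∀ k, 0 < ρ k ∧ ρ k ≤ Λ)
    (hsol : ∀ k, IsMFSolution (ρ k) (u k))
    (hblow : Tendsto
      (fun k => sSup ((u k) '' closedBall (0 : EuclideanSpace ℝ (Fin 4)) 1))
      atTop atTop) :
    ∃ m : ℕ, 0 < m ∧ ∃ φ : ℕ → ℕ, StrictMono φ ∧
      Tendsto (fun j => ρ (φ j)) atTop (nhds (64 * Real.pi ^ 2 * m)) := by
  choose w l h using fun k => rad_data (hρ k).1 (hsol k)
  refine ⟨1, one_pos, id, strictMono_id, ?_⟩
  have := rad_limit hρ hblow h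
  simpa using this

end
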